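/- Let G be a finite rational group in which any two elements of the same odd order are conjugate, suppose every normal 2-subgroup of G is trivial (O_2(G) = 1), and suppose the unique minimal normal subgroup N of G is an elementary abelian q-group of order q^r for an odd prime q. Then N has a complement H in G (that is, G = HN with H ∩ N = 1), the orders of H and N are coprime, and N is a Sylow q-subgroup of G. -/

import Mathlib

/-!
By (OddC) the group `G` acts on `N`, a vector space of dimension `r` over `𝔽_q`, transitively on
the nonzero vectors. Let `p` be an odd prime dividing `q ^ r - 1`. A Sylow `p`-subgroup `P` of `G`
fixes no nonzero vector, and every `p`-element is conjugate to its powers with exponent prime to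
`p`. The latter makes the dimension of the space fixed by any cyclic subgroup of `P` congruent to
`r` modulo `p - 1`. This passes to noncyclic subgroups by comparing the averaging idempotents of
the `p + 1` maximal subgroups above a normal subgroup with elementary abelian quotient of rank two.
Hence `p - 1 ∣ r` for all such `p`, and Zsigmondy primes force `r` to be a power of `2`.

Then a Sylow `2`-subgroup of the linear group has a central involution without nonzero fixed
vectors, so some `2`-element `t` inverts `N`. A Frattini argument shows that a Sylow `q`-subgroup
`Q` centralizes `N = {x | x ^ q = 1}`, and that `t` may be replaced by an element inverting `N` and
normalizing `Q`. If `Q ≠ N`, this element acts on `Q` without fixed points, which produces a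
central element `x` of `Q` of order `q ^ 2`. By Burnside's fusion theorem some element normalizing
`Q` conjugates `x` to `x ^ (1 + q)`, hence acts on `⟨x⟩` with order `q`; but the normalizer of `Q`
acts on the center of `Q` through a group of order prime to `q`. So `Q = N`, and the complement
exists by the Schur–Zassenhaus theorem.
-/

open Polynomial

/-! ### Zsigmondy primes -/

theorem orderOf_dvd_sub_one {p : ℕ} [Fact p.Prime] {x : ZMod p} (hx : orderOf x ≠ 0) :
    orderOf x ∣ p - 1 :=
  ZMod.orderOf_dvd_card_sub_one fun h ↦ hx (by rw [h, orderOf_zero])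

theorem orderOf_eq_of_dvd_eval_cyclotomic {p a m : ℕ} [Fact p.Prime] {q : ℤ} (hm : ¬ p ∣ m)
    (h : (p : ℤ) ∣ (cyclotomic (p ^ a * m) ℤ).eval q) : orderOf (q : ZMod p) = m := by
  have : NeZero (m : ZMod p) := ⟨by rwa [Ne, ZMod.natCast_eq_zero_iff]⟩
  have hroot : (cyclotomic (p ^ a * m) (ZMod p)).IsRoot (q : ZMod p) := by
    rwa [IsRoot, ← map_cyclotomic_int, eval_intCast_map, eq_intCast,
      ZMod.intCast_zmod_eq_zero_iff_dvd]
  exact (isRoot_cyclotomic_prime_pow_mul_iff_of_charP.1 hroot).eq_orderOf.symm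

theorem dvd_sub_one_of_dvd_eval_cyclotomic {p a m : ℕ} [Fact p.Prime] {q : ℤ} (hm : ¬ p ∣ m)
    (h : (p : ℤ) ∣ (cyclotomic (p ^ a * m) ℤ).eval q) : m ∣ p - 1 := by
  have horder := orderOf_eq_of_dvd_eval_cyclotomic hm h
  exact horder ▸ orderOf_dvd_sub_one (horder ▸ fun h0 ↦ hm (h0 ▸ dvd_zero p))

theorem lt_of_dvd_eval_cyclotomic {p p' n : ℕ} (hp : p.Prime) (hp' : p'.Prime) (hn : n ≠ 0)
    {q : ℤ} (h : (p : ℤ) ∣ (cyclotomic n ℤ).eval q) (hp'n : p' ∣ n) (hne : p' ≠ p) : p' < p := by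
  have := Fact.mk hp
  obtain ⟨a, m, hm, rfl⟩ := Nat.exists_eq_pow_mul_and_not_dvd hn p hp.ne_one
  have hp'm : p' ∣ m := (hp'.dvd_mul.1 hp'n).resolve_left fun h ↦
    hne ((Nat.prime_dvd_prime_iff_eq hp' hp).1 (hp'.dvd_of_dvd_pow h))
  have hle := Nat.le_of_dvd (by have := hp.two_le; lia)
    (hp'm.trans (dvd_sub_one_of_dvd_eval_cyclotomic hm h))
  have := hp.pos
  lia

theorem cyclotomic_mul_dvd_geom_sum {p s : ℕ} (hp : 1 < p) (hs : 0 < s) :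
    cyclotomic (p * s) ℤ ∣ ∑ i ∈ Finset.range p, (X ^ s) ^ i := by
  have hmem : s ∈ (p * s).properDivisors :=
    Nat.mem_properDivisors.2 ⟨dvd_mul_left s p, lt_mul_left hs hp⟩
  have hne : (X ^ s - 1 : ℤ[X]) ≠ 0 := by simpa using X_pow_sub_C_ne_zero hs (1 : ℤ)
  have hdvd := X_pow_sub_one_mul_cyclotomic_dvd_X_pow_sub_one_of_dvd ℤ hmem
  have hgeom : (X ^ (p * s) - 1 : ℤ[X]) = (X ^ s - 1) * ∑ i ∈ Finset.range p, (X ^ s) ^ i := by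
    rw [mul_geom_sum, ← pow_mul, mul_comm]
  rw [hgeom] at hdvd
  exact (mul_dvd_mul_iff_left hne).1 hdvd

theorem not_sq_dvd_eval_cyclotomic {p n : ℕ} (hp : p.Prime) (hodd : Odd p) (hn : n ≠ 0)
    (hpn : p ∣ n) (q : ℤ) : ¬ (p : ℤ) ^ 2 ∣ (cyclotomic n ℤ).eval q := by
  intro hsq
  have := Fact.mk hp
  obtain ⟨s, rfl⟩ := hpn
  have hpow : (p : ℤ) ∣ q ^ s - 1 := by
    obtain ⟨a, m, hm, hps⟩ := Nat.exists_eq_pow_mul_and_not_dvd hn p hp.ne_one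
    have horder := orderOf_eq_of_dvd_eval_cyclotomic hm
      (hps ▸ (dvd_pow_self (p : ℤ) two_ne_zero).trans hsq)
    have hms : m ∣ s := (Nat.Coprime.dvd_mul_left ((hp.coprime_iff_not_dvd.2 hm).symm)).1
      (hps ▸ dvd_mul_left m (p ^ a))
    have hone : (q : ZMod p) ^ s = 1 := orderOf_dvd_iff_pow_eq_one.1 (horder ▸ hms)
    rw [← ZMod.intCast_zmod_eq_zero_iff_dvd]
    simp [hone]
  obtain ⟨b, hb⟩ := hpow
  have hgeom : (p : ℤ) ^ 2 ∣ ∑ i ∈ Finset.range p, (1 + p * b) ^ i := by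
    rw [show 1 + (p : ℤ) * b = q ^ s by lia]
    have hs : 0 < s := Nat.pos_of_ne_zero (right_ne_zero_of_mul hn)
    simpa [eval_finsetSum] using hsq.trans (eval_dvd (cyclotomic_mul_dvd_geom_sum hp.one_lt hs))
  have hp_sq : (p : ℤ) ^ 2 ∣ p :=
    (dvd_sub_right hgeom).1 (by simpa using odd_sq_dvd_geom_sum₂_sub (1 : ℤ) b hodd)
  have hle : p ^ 2 ≤ p := Nat.le_of_dvd hp.pos (by exact_mod_cast hp_sq)
  nlinarith [hp.two_le]

theorem exists_eq_two_pow_of_two_dvd_eval_cyclotomic {n : ℕ} (hn : n ≠ 0) {q : ℤ}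
    (h : 2 ∣ (cyclotomic n ℤ).eval q) : ∃ a, n = 2 ^ a := by
  obtain ⟨a, m, hm, rfl⟩ := Nat.exists_eq_pow_mul_and_not_dvd hn 2 (by norm_num)
  have hm1 : m ∣ 1 := dvd_sub_one_of_dvd_eval_cyclotomic hm h
  exact ⟨a, by rw [Nat.dvd_one.1 hm1, mul_one]⟩

-- A prime factor of `n` dividing `Φₙ(q)` exceeds all other prime factors of `n`, so there is at
-- most one, and its square does not divide `Φₙ(q)`.
theorem exists_prime_natAbs_eval_cyclotomic_le {n : ℕ} {q : ℤ} (hn0 : n ≠ 0) (hn : ∀ a, n ≠ 2 ^ a)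
    (hone : 1 < ((cyclotomic n ℤ).eval q).natAbs)
    (hdvd : ∀ p : ℕ, p.Prime → (p : ℤ) ∣ (cyclotomic n ℤ).eval q → p ∣ n) :
    ∃ p : ℕ, p.Prime ∧ p ∣ n ∧ ((cyclotomic n ℤ).eval q).natAbs ≤ p := by
  set F : ℕ := ((cyclotomic n ℤ).eval q).natAbs
  have hF {d : ℕ} : d ∣ F ↔ (d : ℤ) ∣ (cyclotomic n ℤ).eval q := Int.natCast_dvd.symm
  obtain ⟨p, hp, hpF⟩ := Nat.exists_prime_and_dvd hone.ne'
  have hpn : p ∣ n := hdvd p hp (hF.1 hpF)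
  refine ⟨p, hp, hpn, ?_⟩
  have hne_two : p ≠ 2 := by
    rintro rfl
    obtain ⟨a, ha⟩ := exists_eq_two_pow_of_two_dvd_eval_cyclotomic hn0 (hF.1 hpF)
    exact hn a ha
  have hunique {p' : ℕ} (hp' : p'.Prime) (hp'F : p' ∣ F) : p' = p := by
    by_contra hne
    have h₁ := lt_of_dvd_eval_cyclotomic hp hp' hn0 (hF.1 hpF) (hdvd p' hp' (hF.1 hp'F)) hne
    have h₂ := lt_of_dvd_eval_cyclotomic hp' hp hn0 (hF.1 hp'F) hpn (Ne.symm hne)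
    exact h₁.asymm h₂
  have hFpow := Nat.eq_prime_pow_of_unique_prime_dvd (by lia) hunique
  have hlen : F.primeFactorsList.length ≤ 1 := by
    by_contra! h
    refine not_sq_dvd_eval_cyclotomic hp (hp.odd_of_ne_two hne_two) hn0 hpn q ?_
    exact_mod_cast hF.1 ((pow_dvd_pow p h).trans hFpow.symm.dvd)
  calc F = p ^ F.primeFactorsList.length := hFpow
    _ ≤ p ^ 1 := Nat.pow_le_pow_right hp.pos hlen
    _ = p := pow_one p

theorem exists_prime_orderOf_eq {q n : ℕ} (hq : 3 ≤ q) (hn0 : n ≠ 0) (hn : ∀ a, n ≠ 2 ^ a) :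
    ∃ p, p.Prime ∧ orderOf (q : ZMod p) = n := by
  by_contra! hcon
  have hn1 : 1 < n := by have := hn 0; lia
  have hlow : (q - 1) ^ n.totient < ((cyclotomic n ℤ).eval (q : ℤ)).natAbs :=
    sub_one_pow_totient_lt_natAbs_cyclotomic_eval hn1 (by lia)
  have hpow_pos : 0 < (q - 1) ^ n.totient := pow_pos (by lia) _
  obtain ⟨p, hp, hpn, hle⟩ := exists_prime_natAbs_eval_cyclotomic_le hn0 hn (q := q) (by lia)
    fun p hp hpF ↦ by_contra fun hpn ↦ by
      have := Fact.mk hp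
      have horder := orderOf_eq_of_dvd_eval_cyclotomic (a := 0) hpn (by simpa using hpF)
      exact hcon p hp (by simpa only [Int.cast_natCast] using horder)
  have htotient : p - 1 ≤ n.totient := by
    rw [← Nat.totient_prime hp]
    exact Nat.le_of_dvd (Nat.totient_pos.2 (by lia)) (Nat.totient_dvd_of_dvd hpn)
  have : 2 ^ (p - 1) ≤ (q - 1) ^ n.totient :=
    (Nat.pow_le_pow_right two_pos htotient).trans (Nat.pow_le_pow_left (by lia) _)
  have : p - 1 < 2 ^ (p - 1) := Nat.lt_two_pow_self
  lia

theorem exists_eq_two_pow_mul {k m n : ℕ} (hm : ¬ 2 ∣ m) (hn : Even n) (hmn : m ∣ n)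
    (hnk : n ∣ 2 ^ k * m) : ∃ j ∈ Finset.Icc 1 k, n = 2 ^ j * m := by
  have hm0 : 0 < m := Nat.pos_of_ne_zero fun h ↦ hm (h ▸ dvd_zero 2)
  obtain ⟨c, rfl⟩ := hmn
  rw [mul_comm] at hnk
  obtain ⟨j, hjk, rfl⟩ := (Nat.dvd_prime_pow Nat.prime_two).1 (Nat.dvd_of_mul_dvd_mul_right hm0 hnk)
  refine ⟨j, Finset.mem_Icc.2 ⟨?_, hjk⟩, mul_comm _ _⟩
  by_contra! hj
  obtain rfl : j = 0 := by lia
  exact hm (by simpa using hn.two_dvd)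

-- If `r = 2 ^ k * m` with `m > 1` odd, choose for each `i ≤ k` a prime `p i` modulo which `q` has
-- order `2 ^ i * m`. Then `p i - 1 = 2 ^ j * m` for some `1 ≤ j ≤ k`, so two of the `p i` coincide.
theorem exists_eq_two_pow_of_forall_sub_one_dvd {q r : ℕ} (hq : 3 ≤ q) (hr : r ≠ 0)
    (h : ∀ p, p.Prime → Odd p → p ∣ q ^ r - 1 → p - 1 ∣ r) : ∃ k, r = 2 ^ k := by
  obtain ⟨k, m, hm, rfl⟩ := Nat.exists_eq_pow_mul_and_not_dvd hr 2 (by norm_num)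
  by_contra! hpow
  have hm0 : 0 < m := Nat.pos_of_ne_zero (right_ne_zero_of_mul hr)
  have hm1 : m ≠ 1 := fun hm1 ↦ hpow k (by rw [hm1, mul_one])
  have hne (i a : ℕ) : 2 ^ i * m ≠ 2 ^ a := fun ha ↦ hm1 <|
    Nat.eq_one_of_dvd_coprimes ((Nat.prime_two.coprime_iff_not_dvd.2 hm).symm.pow_right a)
      dvd_rfl (ha ▸ dvd_mul_left m (2 ^ i))
  choose p hp horder using fun i ↦ exists_prime_orderOf_eq hq (by positivity) (hne i)
  have hmul_dvd (i : ℕ) : 2 ^ i * m ∣ p i - 1 := by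
    have := Fact.mk (hp i)
    exact horder i ▸ orderOf_dvd_sub_one (by rw [horder i]; positivity)
  have hp_odd (i : ℕ) : Odd (p i) := (hp i).odd_of_ne_two fun h2 ↦ hm1 <| Nat.dvd_one.1 <| by
    simpa [h2] using (dvd_mul_left m (2 ^ i)).trans (hmul_dvd i)
  have hexp (i : ℕ) (hi : i ∈ Finset.range (k + 1)) :
      ∃ j ∈ Finset.Icc 1 k, p i - 1 = 2 ^ j * m := by
    have hdvd : 2 ^ i * m ∣ 2 ^ k * m :=
      mul_dvd_mul_right (pow_dvd_pow 2 (Nat.le_of_lt_succ (Finset.mem_range.1 hi))) m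
    refine exists_eq_two_pow_mul hm ((hp_odd i).tsub_odd odd_one)
      ((dvd_mul_left m _).trans (hmul_dvd i)) (h _ (hp i) (hp_odd i) ?_)
    refine .trans ?_ (Nat.pow_sub_one_dvd_pow_sub_one q hdvd)
    rw [← ZMod.natCast_eq_zero_iff, Nat.cast_sub (Nat.one_le_pow _ _ (by lia)), ← horder i]
    simp [pow_orderOf_eq_one]
  choose! j hj hpj using hexp
  obtain ⟨x, hx, y, hy, hxy, hjxy⟩ := Finset.exists_ne_map_eq_of_card_lt_of_maps_to
    (by simp : (Finset.Icc 1 k).card < (Finset.range (k + 1)).card) hj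
  have hpxy : p x = p y := by
    have := hpj x hx
    have := hpj y hy
    have := (hp x).one_lt
    have := (hp y).one_lt
    rw [hjxy] at *
    lia
  have hpow_eq : 2 ^ x * m = 2 ^ y * m := by rw [← horder x, ← horder y, hpxy]
  exact hxy (Nat.pow_right_injective le_rfl (Nat.eq_of_mul_eq_mul_right hm0 hpow_eq))

theorem two_pow_dvd_of_ordProj_two_dvd {q k a : ℕ} (hq : Odd q) (hq1 : q ≠ 1)
    (h : ordProj[2] (q ^ 2 ^ k - 1) ∣ q ^ a - 1) : 2 ^ k ∣ a := by
  obtain ⟨j, hjk, hj⟩ := (Nat.dvd_prime_pow Nat.prime_two).1 (Nat.gcd_dvd_left (2 ^ k) a)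
  obtain rfl | hlt := hjk.eq_or_lt
  · exact Nat.gcd_eq_left_iff_dvd.1 hj
  exfalso
  obtain ⟨k, rfl⟩ := Nat.exists_eq_add_one_of_ne_zero hlt.ne_bot
  set v := (q ^ 2 ^ (k + 1) - 1).factorization 2
  have hhalf : 2 ^ v ∣ q ^ 2 ^ k - 1 := by
    have hgcd : 2 ^ v ∣ q ^ 2 ^ j - 1 := by
      rw [← hj, ← Nat.pow_sub_one_gcd_pow_sub_one]
      exact Nat.dvd_gcd (Nat.ordProj_dvd _ _) h
    exact hgcd.trans (Nat.pow_sub_one_dvd_pow_sub_one _ (pow_dvd_pow 2 (Nat.le_of_lt_succ hlt)))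
  have hfactor : q ^ 2 ^ (k + 1) - 1 = (q ^ 2 ^ k - 1) * (q ^ 2 ^ k + 1) := by
    rw [pow_succ 2 k, pow_mul, mul_comm, ← Nat.sq_sub_sq, one_pow]
  have hdvd : 2 ^ (v + 1) ∣ q ^ 2 ^ (k + 1) - 1 := by
    rw [hfactor, pow_succ]
    exact mul_dvd_mul hhalf (hq.pow.add_odd odd_one).two_dvd
  have hne : q ^ 2 ^ (k + 1) - 1 ≠ 0 := by
    have := Nat.one_lt_pow (n := 2 ^ (k + 1)) (by positivity) (show 1 < q by have := hq.pos; lia)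
    lia
  have := (Nat.prime_two.pow_dvd_iff_le_factorization hne).1 hdvd
  lia

theorem sub_one_dvd_totient {p d k : ℕ} (hp : p.Prime) (hd : d ∣ p ^ k) (hd1 : d ≠ 1) :
    p - 1 ∣ d.totient := by
  obtain ⟨j, -, rfl⟩ := (Nat.dvd_prime_pow hp).1 hd
  rw [Nat.totient_prime_pow hp (Nat.pos_of_ne_zero (by rintro rfl; exact hd1 (pow_zero p)))]
  exact dvd_mul_left _ _

/-! ### Operators of prime power order -/

section Operators

open Module Module.End

variable {K V : Type*} [Field K] [AddCommGroup V] [Module K V]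

theorem finrank_eq_sum_finrank_eigenspace [IsAlgClosed K] [FiniteDimensional K V] {n : ℕ}
    (hn : (n : K) ≠ 0) {f : End K V} (hf : f ^ n = 1) :
    finrank K V = ∑ μ ∈ nthRootsFinset n (1 : K), finrank K (f.eigenspace μ) := by
  have hn0 : 0 < n := Nat.pos_of_ne_zero fun h ↦ hn (by simp [h])
  have hsemisimple : f.IsSemisimple := isSemisimple_of_squarefree_aeval_eq_zero
    (X_pow_sub_one_separable_iff.2 hn).squarefree (by simp [hf])
  have htop : ⨆ μ : nthRootsFinset n (1 : K), f.eigenspace μ = ⊤ := by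
    rw [eq_top_iff, ← hsemisimple.iSup_eigenspace_eq_top, iSup_le_iff]
    intro μ v hv
    obtain rfl | hv0 := eq_or_ne v 0
    · exact zero_mem _
    have hμ : μ ^ n = 1 := by
      have h := HasEigenvector.pow_apply ⟨hv, hv0⟩ n
      rw [hf, one_apply] at h
      exact smul_left_injective K hv0 (by simpa using h.symm)
    exact Submodule.mem_iSup_of_mem ⟨μ, (mem_nthRootsFinset hn0 1).2 hμ⟩ hv
  classical
  have hinternal :
      DirectSum.IsInternal fun μ : nthRootsFinset n (1 : K) ↦ f.eigenspace μ :=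
    DirectSum.isInternal_submodule_of_iSupIndep_of_iSup_eq_top
      (f.eigenspaces_iSupIndep.comp Subtype.val_injective) htop
  rw [← (LinearEquiv.ofBijective (DirectSum.coeLinearMap _) hinternal).finrank_eq,
    finrank_directSum, Finset.univ_eq_attach]
  exact Finset.sum_attach (nthRootsFinset n (1 : K)) fun μ ↦ finrank K (f.eigenspace μ)

theorem finrank_eigenspace_eq_of_isConj {f g : End K V} (h : IsConj f g) (μ : K) :
    finrank K (f.eigenspace μ) = finrank K (g.eigenspace μ) := by
  obtain ⟨c, hc⟩ := h
  let e := LinearMap.GeneralLinearGroup.toLinearEquiv c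
  have heigen : f.eigenspace μ = (g.eigenspace μ).comap e.toLinearMap := by
    ext v
    have hcv : c.val (f v) = g (c.val v) := LinearMap.congr_fun hc v
    rw [Submodule.mem_comap, mem_eigenspace_iff, mem_eigenspace_iff, ← e.injective.eq_iff, map_smul]
    exact ⟨hcv.symm.trans, hcv.trans⟩
  rw [heigen, Submodule.comap_equiv_eq_map_symm, LinearEquiv.finrank_map_eq]

theorem finrank_eigenspace_le_of_isConj_pow [FiniteDimensional K V] {f : End K V} {m : ℕ}
    (hf : IsConj f (f ^ m)) (μ : K) :
    finrank K (f.eigenspace μ) ≤ finrank K (f.eigenspace (μ ^ m)) := by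
  rw [finrank_eigenspace_eq_of_isConj hf (μ ^ m)]
  refine Submodule.finrank_mono fun v hv ↦ ?_
  obtain rfl | hv0 := eq_or_ne v 0
  · exact zero_mem _
  · exact mem_eigenspace_iff.2 (HasEigenvector.pow_apply ⟨hv, hv0⟩ m)

theorem finrank_eigenspace_eq_of_isPrimitiveRoot [FiniteDimensional K V] {f : End K V} {n : ℕ}
    [NeZero n] (hf : ∀ m : ℕ, m.Coprime n → IsConj f (f ^ m)) {μ ν : K}
    (hμ : IsPrimitiveRoot μ n) (hν : IsPrimitiveRoot ν n) :
    finrank K (f.eigenspace μ) = finrank K (f.eigenspace ν) := by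
  apply le_antisymm
  · obtain ⟨m, -, hm, rfl⟩ := hμ.isPrimitiveRoot_iff.1 hν
    exact finrank_eigenspace_le_of_isConj_pow (hf m hm) μ
  · obtain ⟨m, -, hm, rfl⟩ := hν.isPrimitiveRoot_iff.1 hμ
    exact finrank_eigenspace_le_of_isConj_pow (hf m hm) ν

theorem sub_one_dvd_sum_finrank_eigenspace [FiniteDimensional K V] {f : End K V} {p d k : ℕ}
    (hp : p.Prime) (hf : ∀ m : ℕ, m.Coprime p → IsConj f (f ^ m)) (hd : d ∣ p ^ k) (hd1 : d ≠ 1) :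
    p - 1 ∣ ∑ μ ∈ primitiveRoots d K, finrank K (f.eigenspace μ) := by
  obtain hempty | ⟨ζ, hζ⟩ := (primitiveRoots d K).eq_empty_or_nonempty
  · simp [hempty]
  have hd0 : 0 < d := Nat.pos_of_dvd_of_pos hd (pow_pos hp.pos k)
  have : NeZero d := ⟨hd0.ne'⟩
  replace hζ := isPrimitiveRoot_of_mem_primitiveRoots hζ
  have hpd : p ∣ d := by
    obtain ⟨j, -, rfl⟩ := (Nat.dvd_prime_pow hp).1 hd
    exact dvd_pow_self p (by rintro rfl; exact hd1 (pow_zero p))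
  have hconst (μ : K) (hμ : μ ∈ primitiveRoots d K) :
      finrank K (f.eigenspace μ) = finrank K (f.eigenspace ζ) :=
    finrank_eigenspace_eq_of_isPrimitiveRoot (fun m hm ↦ hf m (hm.coprime_dvd_right hpd))
      (isPrimitiveRoot_of_mem_primitiveRoots hμ) hζ
  rw [Finset.sum_congr rfl hconst, Finset.sum_const, hζ.card_primitiveRoots, smul_eq_mul]
  exact (sub_one_dvd_totient hp hd hd1).mul_right _

theorem finrank_eigenspace_one_modEq [IsAlgClosed K] [FiniteDimensional K V] {p k : ℕ}
    (hp : p.Prime) (hpK : (p : K) ≠ 0) {f : End K V} (hfk : f ^ p ^ k = 1)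
    (hf : ∀ m : ℕ, m.Coprime p → IsConj f (f ^ m)) :
    finrank K (f.eigenspace 1) ≡ finrank K V [MOD p - 1] := by
  classical
  have hdisjoint : ((p ^ k).divisors : Set ℕ).PairwiseDisjoint fun d ↦ primitiveRoots d K :=
    fun d _ d' _ hne ↦ IsPrimitiveRoot.disjoint hne
  rw [finrank_eq_sum_finrank_eigenspace (by exact_mod_cast pow_ne_zero k hpK) hfk,
    IsPrimitiveRoot.nthRoots_one_eq_biUnion_primitiveRoots, Finset.sum_biUnion hdisjoint,
    ← Finset.add_sum_erase _ _ (Nat.one_mem_divisors.2 (pow_pos hp.pos k).ne'),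
    IsPrimitiveRoot.primitiveRoots_one, Finset.sum_singleton]
  refine (Nat.modEq_iff_dvd' (Nat.le_add_right _ _)).2 ?_
  rw [Nat.add_sub_cancel_left]
  refine Finset.dvd_sum fun d hd ↦ ?_
  rw [Finset.mem_erase, Nat.mem_divisors] at hd
  exact sub_one_dvd_sum_finrank_eigenspace hp hf hd.2.1 hd.1

theorem finrank_ker_baseChange {W : Type*} [AddCommGroup W] [Module K W] (L : Type*) [Field L]
    [Algebra K L] (f : V →ₗ[K] W) :
    finrank L (LinearMap.ker (f.baseChange L)) = finrank K (LinearMap.ker f) := by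
  have hinj : Function.Injective ((LinearMap.ker f).subtype.baseChange L) :=
    Module.Flat.lTensor_preserves_injective_linearMap _ (LinearMap.ker f).injective_subtype
  rw [← finrank_baseChange (R := L) (S := K) (M' := LinearMap.ker f),
    ← LinearMap.finrank_range_of_inj hinj]
  exact congrArg (fun U : Submodule L _ ↦ finrank L U) (Module.Flat.ker_lTensor_eq L L f)

theorem finrank_ker_sub_one_modEq [FiniteDimensional K V] {p k : ℕ}
    (hp : p.Prime) (hpK : (p : K) ≠ 0) {f : End K V} (hfk : f ^ p ^ k = 1)
    (hf : ∀ m : ℕ, m.Coprime p → IsConj f (f ^ m)) :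
    finrank K (LinearMap.ker (f - 1)) ≡ finrank K V [MOD p - 1] := by
  let L := AlgebraicClosure K
  let Φ := Module.End.baseChangeHom K L V
  have hmod := finrank_eigenspace_one_modEq (f := Φ f) hp
    (by simpa using (map_ne_zero (algebraMap K L)).2 hpK) (by rw [← map_pow, hfk, map_one])
    fun m hm ↦ by rw [← map_pow]; exact Φ.toRingHom.toMonoidHom.map_isConj (hf m hm)
  have hker : (Φ f).eigenspace 1 = LinearMap.ker ((f - 1).baseChange L) := by
    rw [eigenspace_def, one_smul, LinearMap.baseChange_sub]
    exact congrArg (fun g ↦ LinearMap.ker (Φ f - g)) (map_one Φ).symm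
  rwa [hker, finrank_ker_baseChange, finrank_baseChange] at hmod

end Operators

/-! ### Characters of noncyclic `p`-groups -/

section Pencil

variable {Γ : Type*} [Group Γ] {p : ℕ} [Fact p.Prime]

theorem surjective_of_ne_one {f : Γ →* Multiplicative (ZMod p)} (hf : f ≠ 1) :
    Function.Surjective f := by
  have hcard : Nat.card (Multiplicative (ZMod p)) = p := by simp
  have := Fact.mk (hcard.symm ▸ Fact.out : (Nat.card (Multiplicative (ZMod p))).Prime)
  exact MonoidHom.range_eq_top.1 (f.range.eq_bot_or_eq_top_of_prime_card.resolve_left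
    fun h ↦ hf (MonoidHom.range_eq_bot_iff.1 h))

theorem index_ker_of_ne_one {f : Γ →* Multiplicative (ZMod p)} (hf : f ≠ 1) :
    f.ker.index = p := by
  rw [Subgroup.index_ker, MonoidHom.range_eq_top.2 (surjective_of_ne_one hf), Subgroup.card_top]
  simp

theorem isCoatom_ker_of_ne_one {f : Γ →* Multiplicative (ZMod p)} (hf : f ≠ 1) :
    IsCoatom f.ker := by
  have hcard : Nat.card (Multiplicative (ZMod p)) = p := by simp
  have := isSimpleGroup_of_prime_card hcard
  rw [← MonoidHom.comap_bot]
  exact Subgroup.isCoatom_comap_of_surjective (surjective_of_ne_one hf) isCoatom_bot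

theorem exists_le_ker_of_ne_top [Finite Γ] (hΓ : IsPGroup p Γ) {H : Subgroup Γ} (hH : H ≠ ⊤) :
    ∃ f : Γ →* Multiplicative (ZMod p), f ≠ 1 ∧ H ≤ f.ker := by
  have hp : p.Prime := Fact.out
  obtain ⟨n, hn⟩ := IsPGroup.iff_card.1 hΓ
  obtain ⟨m, hm⟩ := IsPGroup.iff_card.1 (hΓ.to_subgroup H)
  have hmn : m < n := (Nat.pow_lt_pow_iff_right hp.one_lt).1 (hm ▸ hn ▸
    H.card_le_card_group.lt_of_ne fun h ↦ hH (H.eq_top_of_card_eq h))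
  obtain ⟨k, rfl⟩ := Nat.exists_eq_add_of_lt hmn
  obtain ⟨M, hM, hHM⟩ := Sylow.exists_subgroup_card_pow_prime_le p (m := m + k)
    (hn ▸ pow_dvd_pow p (Nat.le_succ _)) H hm (Nat.le_add_right m k)
  have hindex : M.index = p := by
    have := M.card_mul_index
    rw [hM, hn, pow_succ] at this
    exact Nat.eq_of_mul_eq_mul_left (pow_pos hp.pos _) this
  have hnormal : M.Normal := Subgroup.normal_of_index_eq_minFac_card <| by
    rw [hindex, hn, hp.pow_minFac (Nat.succ_ne_zero _)]
  let e : Γ ⧸ M ≃* Multiplicative (ZMod p) := mulEquivOfPrimeCardEq (p := p) hindex (by simp)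
  have hker : ((e : Γ ⧸ M →* Multiplicative (ZMod p)).comp (QuotientGroup.mk' M)).ker = M := by
    rw [MonoidHom.ker_mulEquiv_comp, QuotientGroup.ker_mk']
  refine ⟨_, fun h ↦ ?_, hker.ge.trans' hHM⟩
  rw [h, MonoidHom.ker_one] at hker
  rw [← hker, Subgroup.index_top] at hindex
  exact hp.one_lt.ne hindex

theorem exists_not_ker_le_ker [Finite Γ] (hΓ : IsPGroup p Γ) (hcyc : ¬ IsCyclic Γ) :
    ∃ a b : Γ →* Multiplicative (ZMod p), b ≠ 1 ∧ ¬ b.ker ≤ a.ker := by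
  have htop (g : Γ) : Subgroup.zpowers g ≠ ⊤ := fun h ↦
    hcyc ⟨g, (Subgroup.eq_top_iff' _).1 h⟩
  obtain ⟨a, ha, -⟩ := exists_le_ker_of_ne_top hΓ (htop 1)
  obtain ⟨g, hg⟩ := DFunLike.ne_iff.1 ha
  obtain ⟨b, hb, hgb⟩ := exists_le_ker_of_ne_top hΓ (htop g)
  exact ⟨a, b, hb, fun h ↦ hg (h (Subgroup.zpowers_le.1 hgb))⟩

/-- The pencil of subgroups `ker b` and `ker (a * b ^ t)`, for `t` modulo `p`, spanned by two
characters `a` and `b`. When these are independent its members correspond to the `p + 1` lines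
of `Γ ⧸ (ker a ⊓ ker b)`, viewed as a plane over `ZMod p`. -/
def pencil (a b : Γ →* Multiplicative (ZMod p)) : Option (ZMod p) → Subgroup Γ
  | none => b.ker
  | some t => (a * b ^ t.val).ker

variable {a b : Γ →* Multiplicative (ZMod p)}

theorem mem_pencil_some {t : ZMod p} {x : Γ} :
    x ∈ pencil a b (some t) ↔ (a x).toAdd + t * (b x).toAdd = 0 := by
  rw [← ZMod.natCast_zmod_val t, ← nsmul_eq_mul, ZMod.natCast_zmod_val]
  exact Iff.rfl

theorem exists_pencil_eq_ker (hb : b ≠ 1) (hab : ¬ b.ker ≤ a.ker) (i : Option (ZMod p)) :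
    ∃ f : Γ →* Multiplicative (ZMod p), f ≠ 1 ∧ pencil a b i = f.ker := by
  obtain ⟨g, hbg, hag⟩ := SetLike.not_le_iff_exists.1 hab
  obtain _ | t := i
  · exact ⟨b, hb, rfl⟩
  · refine ⟨_, DFunLike.ne_iff.2 ⟨g, ?_⟩, rfl⟩
    simpa [MonoidHom.mem_ker.1 hbg] using hag

theorem pencil_ne_top (hb : b ≠ 1) (hab : ¬ b.ker ≤ a.ker) (i : Option (ZMod p)) :
    pencil a b i ≠ ⊤ := by
  obtain ⟨f, hf, hfi⟩ := exists_pencil_eq_ker hb hab i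
  exact hfi ▸ (isCoatom_ker_of_ne_one hf).ne_top

theorem ker_inf_ker_le_pencil (i : Option (ZMod p)) : a.ker ⊓ b.ker ≤ pencil a b i := by
  rintro x ⟨ha, hb⟩
  obtain _ | t := i
  · exact hb
  · exact MonoidHom.mem_ker.2 (by simp [MonoidHom.mem_ker.1 ha, MonoidHom.mem_ker.1 hb])

theorem existsUnique_mem_pencil {x : Γ} (hx : x ∉ a.ker ⊓ b.ker) : ∃! i, x ∈ pencil a b i := by
  by_cases hbx : (b x).toAdd = 0
  · refine ⟨none, hbx, fun i hi ↦ ?_⟩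
    obtain _ | t := i
    · rfl
    · rw [mem_pencil_some, hbx, mul_zero, add_zero] at hi
      exact absurd ⟨hi, hbx⟩ hx
  · refine ⟨some (-(a x).toAdd / (b x).toAdd), ?_, fun i hi ↦ ?_⟩
    · simp [mem_pencil_some, hbx]
    · obtain _ | t := i
      · exact absurd hi hbx
      · rw [mem_pencil_some, add_comm, ← eq_neg_iff_add_eq_zero] at hi
        rw [← hi, mul_div_cancel_right₀ _ hbx]

open scoped Classical in
theorem sum_pencil_add [Fintype Γ] {M : Type*} [AddCommMonoid M] (f : Γ → M) :
    ∑ i, ∑ x with x ∈ pencil a b i, f x + ∑ x with x ∈ a.ker ⊓ b.ker, f x =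
      ∑ x, f x + (p + 1) • ∑ x with x ∈ a.ker ⊓ b.ker, f x := by
  simp only [Finset.sum_filter, Finset.smul_sum]
  rw [Finset.sum_comm, ← Finset.sum_add_distrib, ← Finset.sum_add_distrib]
  refine Finset.sum_congr rfl fun x _ ↦ ?_
  by_cases hx : x ∈ a.ker ⊓ b.ker
  · simp only [ker_inf_ker_le_pencil _ hx, hx, if_true, Finset.sum_const, Finset.card_univ,
      Fintype.card_option, ZMod.card, add_comm]
  · obtain ⟨i, hi, hunique⟩ := existsUnique_mem_pencil hx
    rw [Finset.sum_eq_single i (fun j _ hj ↦ if_neg fun h ↦ hj (hunique j h)) (by simp)]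
    simp [hi, hx]

theorem card_pencil_mul [Finite Γ] (hb : b ≠ 1) (hab : ¬ b.ker ≤ a.ker) (i : Option (ZMod p)) :
    Nat.card (pencil a b i) * p = Nat.card Γ := by
  obtain ⟨f, hf, hfi⟩ := exists_pencil_eq_ker hb hab i
  rw [hfi, ← f.ker.card_mul_index, index_ker_of_ne_one hf]

theorem card_pencil [Finite Γ] (hb : b ≠ 1) (hab : ¬ b.ker ≤ a.ker) (i : Option (ZMod p)) :
    Nat.card (pencil a b i) = p * Nat.card (a.ker ⊓ b.ker : Subgroup Γ) := by
  classical
  cases nonempty_fintype Γ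
  have hp : 0 < p := Fact.out (p := p.Prime).pos
  have hcard (j : Option (ZMod p)) : Nat.card (pencil a b j) = Nat.card (pencil a b i) :=
    Nat.eq_of_mul_eq_mul_right hp
      ((card_pencil_mul hb hab j).trans (card_pencil_mul hb hab i).symm)
  have hcount := sum_pencil_add (a := a) (b := b) fun _ ↦ 1
  simp only [Finset.sum_const, smul_eq_mul, mul_one, ← Fintype.card_subtype,
    ← Nat.card_eq_fintype_card, Finset.card_univ] at hcount
  have hcount' : (p + 1) * Nat.card (pencil a b i) + Nat.card (a.ker ⊓ b.ker : Subgroup Γ) =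
      Nat.card (pencil a b i) * p + (p + 1) * Nat.card (a.ker ⊓ b.ker : Subgroup Γ) := by
    rw [card_pencil_mul hb hab, ← hcount]
    simp only [hcard, Finset.sum_const, Finset.card_univ, Fintype.card_option, ZMod.card,
      smul_eq_mul]
  linarith

theorem pencil_injective [Finite Γ] (hb : b ≠ 1) (hab : ¬ b.ker ≤ a.ker) :
    Function.Injective (pencil a b) := by
  refine fun i j hij ↦ by_contra fun hne ↦ ?_
  have hle : pencil a b i ≤ a.ker ⊓ b.ker := fun x hx ↦ by_contra fun hx' ↦
    hne ((existsUnique_mem_pencil hx').unique hx (hij ▸ hx))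
  have hcard := Subgroup.card_le_of_le hle
  rw [card_pencil hb hab] at hcard
  have := Fact.out (p := p.Prime).two_le
  have : 0 < Nat.card (a.ker ⊓ b.ker : Subgroup Γ) := Nat.card_pos
  nlinarith

theorem pencil_sup_pencil [Finite Γ] (hb : b ≠ 1) (hab : ¬ b.ker ≤ a.ker) {i j : Option (ZMod p)}
    (hij : i ≠ j) : pencil a b i ⊔ pencil a b j = ⊤ := by
  have hne := (pencil_injective hb hab).ne hij
  obtain ⟨f, hf, hfi⟩ := exists_pencil_eq_ker hb hab i
  obtain ⟨g, hg, hgj⟩ := exists_pencil_eq_ker hb hab j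
  rw [hfi, hgj] at hne ⊢
  exact (isCoatom_ker_of_ne_one hf).sup_eq_top_of_ne (isCoatom_ker_of_ne_one hg) hne

end Pencil

/-! ### Fixed spaces of `p`-groups -/

section FixedSpaces

open Module Representation

variable {K V : Type*} [Field K] [AddCommGroup V] [Module K V]

theorem finrank_range_sum_of_orthogonalIdempotents [FiniteDimensional K V] {ι : Type*} [Fintype ι]
    {e : ι → End K V} (he : OrthogonalIdempotents e) :
    finrank K (LinearMap.range (∑ i, e i)) = ∑ i, finrank K (LinearMap.range (e i)) := by
  classical
  let Φ : V →ₗ[K] ∀ i, LinearMap.range (e i) := LinearMap.pi fun i ↦ (e i).rangeRestrict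
  have hker : LinearMap.ker Φ = LinearMap.ker (∑ i, e i) := by
    ext v
    simp only [LinearMap.mem_ker, funext_iff, Φ, LinearMap.pi_apply, Pi.zero_apply,
      Subtype.ext_iff, LinearMap.codRestrict_apply, ZeroMemClass.coe_zero, LinearMap.sum_apply]
    refine ⟨fun h ↦ Finset.sum_eq_zero fun i _ ↦ h i, fun h i ↦ ?_⟩
    have hi : e i * ∑ j, e j = e i := by simp [Finset.mul_sum, he.mul_eq]
    rw [← hi, Module.End.mul_apply, LinearMap.sum_apply, h, map_zero]
  have hrange : LinearMap.range Φ = ⊤ := by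
    refine LinearMap.range_eq_top.2 fun w ↦ ⟨∑ j, (w j : V), funext fun i ↦ Subtype.ext ?_⟩
    have hw (j) : e i (w j) = if i = j then (w j : V) else 0 := by
      obtain ⟨v, hv⟩ := (w j).2
      rw [← hv, ← Module.End.mul_apply, he.mul_eq]
      split_ifs with h
      · rw [h]
      · rfl
    simp [Φ, hw]
  have h₁ := Φ.finrank_range_add_finrank_ker
  have h₂ := (∑ i, e i).finrank_range_add_finrank_ker
  rw [hrange, finrank_top, Module.finrank_pi_fintype, hker] at h₁
  exact Nat.add_right_cancel (h₂.trans h₁.symm)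

theorem finrank_range_add_finrank_range_sub [FiniteDimensional K V] {f g : End K V}
    (hf : IsIdempotentElem f) (hg : IsIdempotentElem g) (hfg : f * g = g) (hgf : g * f = g) :
    finrank K (LinearMap.range g) + finrank K (LinearMap.range (f - g)) =
      finrank K (LinearMap.range f) := by
  have he : OrthogonalIdempotents ![g, f - g] := by
    refine ⟨Fin.forall_fin_two.2 ⟨hg, ?_⟩, fun i j hij ↦ ?_⟩
    · simp [IsIdempotentElem, mul_sub, sub_mul, hf.eq, hg.eq, hfg, hgf]
    · fin_cases i <;> fin_cases j <;> simp_all [mul_sub, sub_mul, hg.eq]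
  have hrank := finrank_range_sum_of_orthogonalIdempotents he
  have hsum : ∑ i, ![g, f - g] i = f := by simp
  rw [hsum, Fin.sum_univ_two] at hrank
  exact hrank.symm

variable {Γ : Type*} [Group Γ] (ρ : Representation K Γ V) {H L : Subgroup Γ}

theorem natCast_card_ne_zero (hΓ : (Nat.card Γ : K) ≠ 0) : (Nat.card H : K) ≠ 0 := fun h ↦
  hΓ (by rw [← H.card_mul_index, Nat.cast_mul, h, zero_mul])

variable {p : ℕ} [Fact p.Prime] {a b : Γ →* Multiplicative (ZMod p)}

section Average

variable [Fintype Γ]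

open scoped Classical in
/-- The average of the operators `ρ x` over `x ∈ H`, which projects onto the vectors fixed by `H`
as soon as the order of `H` is nonzero in `K`. Unlike `Representation.averageMap` it allows to
compare different subgroups of `Γ`. -/
noncomputable def subgroupAverage (H : Subgroup Γ) : End K V :=
  (Nat.card H : K)⁻¹ • ∑ x with x ∈ H, ρ x

theorem subgroupAverage_mul {g : Γ} (hg : g ∈ H) :
    subgroupAverage ρ H * ρ g = subgroupAverage ρ H := by
  classical
  rw [subgroupAverage, smul_mul_assoc, Finset.sum_mul]
  congr 1
  exact Finset.sum_equiv (Equiv.mulRight g) (by simp [H.mul_mem_cancel_right hg]) (by simp)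

theorem mul_subgroupAverage {g : Γ} (hg : g ∈ H) :
    ρ g * subgroupAverage ρ H = subgroupAverage ρ H := by
  classical
  rw [subgroupAverage, mul_smul_comm, Finset.mul_sum]
  congr 1
  exact Finset.sum_equiv (Equiv.mulLeft g) (by simp [H.mul_mem_cancel_left hg]) (by simp)

theorem mul_subgroupAverage_comm [H.Normal] (g : Γ) :
    ρ g * subgroupAverage ρ H = subgroupAverage ρ H * ρ g := by
  classical
  rw [subgroupAverage, mul_smul_comm, smul_mul_assoc, Finset.mul_sum, Finset.sum_mul]
  congr 1
  refine Finset.sum_equiv (MulAut.conj g).toEquiv (fun x ↦ ?_) (by simp [← map_mul])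
  simp [‹H.Normal›.mem_comm_iff (a := g * x)]

open scoped Classical in
theorem card_smul_subgroupAverage (hH : (Nat.card H : K) ≠ 0) :
    (Nat.card H : K) • subgroupAverage ρ H = ∑ x with x ∈ H, ρ x := by
  rw [subgroupAverage, smul_inv_smul₀ hH]

theorem subgroupAverage_apply_eq_self (hH : (Nat.card H : K) ≠ 0) {v : V}
    (hv : ∀ g ∈ H, ρ g v = v) : subgroupAverage ρ H v = v := by
  classical
  rw [subgroupAverage, LinearMap.smul_apply, LinearMap.sum_apply,
    Finset.sum_congr rfl fun g hg ↦ hv g (Finset.mem_filter.1 hg).2, Finset.sum_const,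
    ← Fintype.card_subtype, ← Nat.card_eq_fintype_card, ← Nat.cast_smul_eq_nsmul K,
    inv_smul_smul₀ hH]

theorem mul_subgroupAverage_eq_self (hH : (Nat.card H : K) ≠ 0) {f : End K V}
    (hf : ∀ g ∈ H, f * ρ g = f) : f * subgroupAverage ρ H = f := by
  classical
  rw [subgroupAverage, mul_smul_comm, Finset.mul_sum,
    Finset.sum_congr rfl fun g hg ↦ hf g (Finset.mem_filter.1 hg).2, Finset.sum_const,
    ← Fintype.card_subtype, ← Nat.card_eq_fintype_card, ← Nat.cast_smul_eq_nsmul K,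
    inv_smul_smul₀ hH]

theorem subgroupAverage_mul_subgroupAverage [H.Normal] (hΓ : (Nat.card Γ : K) ≠ 0) :
    subgroupAverage ρ H * subgroupAverage ρ L = subgroupAverage ρ (H ⊔ L) := by
  have hfix (g) (hg : g ∈ H ⊔ L) :
      ρ g * (subgroupAverage ρ H * subgroupAverage ρ L) =
        subgroupAverage ρ H * subgroupAverage ρ L := by
    obtain ⟨h, hh, l, hl, rfl⟩ := Subgroup.mem_sup_of_normal_left.1 hg
    rw [map_mul, mul_assoc, ← mul_assoc (ρ l), mul_subgroupAverage_comm, mul_assoc _ (ρ l),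
      mul_subgroupAverage ρ hl, ← mul_assoc, mul_subgroupAverage ρ hh]
  have hself : subgroupAverage ρ (H ⊔ L) * (subgroupAverage ρ H * subgroupAverage ρ L) =
      subgroupAverage ρ H * subgroupAverage ρ L :=
    LinearMap.ext fun v ↦ subgroupAverage_apply_eq_self ρ (natCast_card_ne_zero hΓ) fun g hg ↦
      LinearMap.congr_fun (hfix g hg) v
  rw [← hself, ← mul_assoc,
    mul_subgroupAverage_eq_self ρ (natCast_card_ne_zero hΓ) fun g hg ↦
      subgroupAverage_mul ρ (Subgroup.mem_sup_left hg),
    mul_subgroupAverage_eq_self ρ (natCast_card_ne_zero hΓ) fun g hg ↦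
      subgroupAverage_mul ρ (Subgroup.mem_sup_right hg)]

theorem range_subgroupAverage (hH : (Nat.card H : K) ≠ 0) :
    LinearMap.range (subgroupAverage ρ H) = invariants (ρ.comp H.subtype) := by
  refine le_antisymm ?_ fun v hv ↦
    ⟨v, subgroupAverage_apply_eq_self ρ hH fun g hg ↦ hv ⟨g, hg⟩⟩
  rintro _ ⟨v, rfl⟩ g
  exact LinearMap.congr_fun (mul_subgroupAverage ρ g.2) v

theorem sum_subgroupAverage_pencil (hΓ : (Nat.card Γ : K) ≠ 0) (hb : b ≠ 1)
    (hab : ¬ b.ker ≤ a.ker) :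
    ∑ i, subgroupAverage ρ (pencil a b i) =
      (p : K) • subgroupAverage ρ ⊤ + subgroupAverage ρ (a.ker ⊓ b.ker) := by
  classical
  have hpencil (i) : (Nat.card (pencil a b i) : K) =
      p * Nat.card (a.ker ⊓ b.ker : Subgroup Γ) := by
    rw [card_pencil hb hab, Nat.cast_mul]
  have htop : (Nat.card (⊤ : Subgroup Γ) : K) =
      p * Nat.card (a.ker ⊓ b.ker : Subgroup Γ) * p := by
    rw [Subgroup.card_top, ← card_pencil_mul hb hab none, Nat.cast_mul, hpencil]
  have hsum := sum_pencil_add (a := a) (b := b) ρ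
  have htop' : ∑ x, ρ x = ∑ x with x ∈ (⊤ : Subgroup Γ), ρ x := by simp
  rw [htop'] at hsum
  simp only [← card_smul_subgroupAverage ρ (natCast_card_ne_zero hΓ),
    ← Nat.cast_smul_eq_nsmul K, hpencil, htop, ← Finset.smul_sum] at hsum
  refine smul_right_injective _ (hpencil none ▸ natCast_card_ne_zero hΓ) (?_ : _ • _ = _ • _)
  push_cast at hsum
  linear_combination (norm := module) hsum

theorem finrank_invariants_add_finrank_range_sub [FiniteDimensional K V] [H.Normal]
    (hΓ : (Nat.card Γ : K) ≠ 0) :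
    finrank K (invariants ρ) +
        finrank K (LinearMap.range (subgroupAverage ρ H - subgroupAverage ρ ⊤)) =
      finrank K (invariants (ρ.comp H.subtype)) := by
  have htop : invariants ρ = LinearMap.range (subgroupAverage ρ ⊤) := by
    rw [range_subgroupAverage ρ (natCast_card_ne_zero hΓ)]
    ext v
    simp
  rw [htop, ← range_subgroupAverage ρ (natCast_card_ne_zero hΓ)]
  apply finrank_range_add_finrank_range_sub <;>
    simp [IsIdempotentElem, subgroupAverage_mul_subgroupAverage ρ hΓ]

end Average

theorem finrank_invariants_ker_inf_ker_add [Finite Γ] [FiniteDimensional K V]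
    (hΓ : (Nat.card Γ : K) ≠ 0) (hb : b ≠ 1) (hab : ¬ b.ker ≤ a.ker) :
    finrank K (invariants (ρ.comp (a.ker ⊓ b.ker).subtype)) + p * finrank K (invariants ρ) =
      ∑ i, finrank K (invariants (ρ.comp (pencil a b i).subtype)) := by
  cases nonempty_fintype Γ
  have hnormal (i) : (pencil a b i).Normal := by
    obtain ⟨f, -, hf⟩ := exists_pencil_eq_ker hb hab i
    exact hf ▸ f.normal_ker
  have hmul (M N : Subgroup Γ) [M.Normal] :
      subgroupAverage ρ M * subgroupAverage ρ N = subgroupAverage ρ (M ⊔ N) :=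
    subgroupAverage_mul_subgroupAverage ρ hΓ
  have he : OrthogonalIdempotents
      fun i ↦ subgroupAverage ρ (pencil a b i) - subgroupAverage ρ ⊤ :=
    ⟨fun i ↦ by simp [IsIdempotentElem, mul_sub, sub_mul, hmul],
      fun i j hij ↦ by simp [mul_sub, sub_mul, hmul, pencil_sup_pencil hb hab hij]⟩
  have hrank := finrank_range_sum_of_orthogonalIdempotents he
  have hdiff : ∑ i, (subgroupAverage ρ (pencil a b i) - subgroupAverage ρ ⊤) =
      subgroupAverage ρ (a.ker ⊓ b.ker) - subgroupAverage ρ ⊤ := by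
    rw [Finset.sum_sub_distrib, sum_subgroupAverage_pencil ρ hΓ hb hab]
    simp [← Nat.cast_smul_eq_nsmul K, add_smul]
  rw [hdiff] at hrank
  simp only [← finrank_invariants_add_finrank_range_sub ρ hΓ, Finset.sum_add_distrib,
    Finset.sum_const, Finset.card_univ, Fintype.card_option, ZMod.card, smul_eq_mul, ← hrank]
  ring

theorem finrank_invariants_modEq_of_forall_ne_top [Finite Γ] [FiniteDimensional K V] {n : ℕ}
    (hΓ : IsPGroup p Γ) (hcyc : ¬ IsCyclic Γ) (hp : (p : K) ≠ 0)
    (hρ : ∀ M : Subgroup Γ, M ≠ ⊤ →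
      finrank K (invariants (ρ.comp M.subtype)) ≡ n [MOD p - 1]) :
    finrank K (invariants ρ) ≡ n [MOD p - 1] := by
  obtain ⟨a, b, hb, hab⟩ := exists_not_ker_le_ker hΓ hcyc
  have hcard : (Nat.card Γ : K) ≠ 0 := by
    obtain ⟨k, hk⟩ := IsPGroup.iff_card.1 hΓ
    rw [hk, Nat.cast_pow]
    exact pow_ne_zero k hp
  have hpencil (i) := hρ _ (pencil_ne_top hb hab i)
  have hinf := hρ (a.ker ⊓ b.ker) fun h ↦
    pencil_ne_top hb hab none (top_le_iff.1 (h ▸ inf_le_right))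
  have hp1 : (p : ZMod (p - 1)) = 1 := by
    rw [← Nat.sub_add_cancel (Fact.out : p.Prime).one_le, Nat.cast_add, Nat.add_sub_cancel,
      ZMod.natCast_self, zero_add, Nat.cast_one]
  have hsum := congrArg (Nat.cast : ℕ → ZMod (p - 1))
    (finrank_invariants_ker_inf_ker_add ρ hcard hb hab)
  simp only [← ZMod.natCast_eq_natCast_iff] at hpencil hinf ⊢
  push_cast [hpencil, hinf, hp1] at hsum
  simpa [hp1, add_mul] using hsum

theorem finrank_invariants_modEq [Finite Γ] [FiniteDimensional K V] (hΓ : IsPGroup p Γ)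
    (hp : (p : K) ≠ 0)
    (hρ : ∀ g, finrank K (LinearMap.ker (ρ g - 1)) ≡ finrank K V [MOD p - 1]) :
    finrank K (invariants ρ) ≡ finrank K V [MOD p - 1] := by
  induction hn : Nat.card Γ using Nat.strong_induction_on generalizing Γ with | _ n ih
  subst hn
  by_cases hcyc : IsCyclic Γ
  · obtain ⟨g, hg⟩ := hcyc.exists_generator
    have hker : invariants ρ = LinearMap.ker (ρ g - 1) := by
      ext v
      simp [mem_invariants_iff_of_forall_mem_zpowers ρ g hg, sub_eq_zero]
    exact hker ▸ hρ g
  · exact finrank_invariants_modEq_of_forall_ne_top ρ hΓ hcyc hp fun M hM ↦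
      ih _ (M.card_le_card_group.lt_of_ne fun h ↦ hM (M.eq_top_of_card_eq h)) _
        (hΓ.to_subgroup M) (fun g ↦ hρ g) rfl

end FixedSpaces

/-! ### Transitive linear groups -/

section Orbits

open MulAction

variable {G X : Type*} [Group G] [MulAction G X]

theorem pow_dvd_card_orbit_sylow [Finite G] {p n : ℕ} [Fact p.Prime] (P : Sylow p G) {x : X}
    (h : p ^ n ∣ Nat.card (orbit G x)) : p ^ n ∣ Nat.card (orbit P x) := by
  rw [Nat.card_coe_set_eq, ← index_stabilizer] at h ⊢
  have hstab : (stabilizer P x).index = (stabilizer G x).relIndex P := rfl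
  have hindex := Subgroup.relIndex_mul_index (inf_le_right : stabilizer G x ⊓ P ≤ P)
  rw [Subgroup.inf_relIndex_right, ← hstab] at hindex
  refine (Nat.Coprime.pow_left n ?_).dvd_of_dvd_mul_right
    (hindex ▸ h.trans (Subgroup.index_dvd_of_le inf_le_left))
  exact (Nat.Prime.coprime_iff_not_dvd Fact.out).2 P.not_dvd_index

theorem dvd_card_of_forall_dvd_card_orbit [Finite X] {d : ℕ} (Y : SubMulAction G X)
    (h : ∀ x ∈ Y, d ∣ Nat.card (orbit G x)) : d ∣ Nat.card Y := by
  classical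
  have := Fintype.ofFinite (orbitRel.Quotient G Y)
  rw [Nat.card_congr (selfEquivSigmaOrbits G Y), Nat.card_sigma]
  refine Finset.dvd_sum fun ω _ ↦ ?_
  rw [Nat.card_coe_set_eq, ← index_stabilizer, SubMulAction.stabilizer_of_subMul,
    index_stabilizer, ← Nat.card_coe_set_eq]
  exact h _ ω.out.2

theorem exists_mem_center_orderOf_eq [Finite G] [Nontrivial G] {p : ℕ} [Fact p.Prime]
    (hG : IsPGroup p G) : ∃ c ∈ Subgroup.center G, orderOf c = p := by
  obtain ⟨k, hk, hcard⟩ := (hG.to_subgroup _).nontrivial_iff_card.1 hG.center_nontrivial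
  obtain ⟨c, hc⟩ := exists_prime_orderOf_dvd_card' (G := Subgroup.center G) p
    (hcard ▸ dvd_pow_self p hk.ne')
  exact ⟨c, c.2, by rwa [Subgroup.orderOf_coe]⟩

theorem exists_smul_comm_of_isPGroup [Finite G] {p : ℕ} [Fact p.Prime] (hG : IsPGroup p G)
    (hX : ∃ (g : G) (x : X), g • x ≠ x) :
    ∃ c : G, (∃ x : X, c • x ≠ x) ∧ (∀ x : X, c ^ p • x = x) ∧
      ∀ (g : G) (x : X), c • g • x = g • c • x := by
  let φ := toPermHom G X
  have hnontrivial : Nontrivial φ.range := by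
    obtain ⟨g, x, hgx⟩ := hX
    exact ⟨⟨φ g, g, rfl⟩, 1, fun h ↦ hgx (DFunLike.congr_fun (congrArg Subtype.val h) x)⟩
  have := Finite.of_surjective _ φ.rangeRestrict_surjective
  obtain ⟨⟨_, c, rfl⟩, hc, horder⟩ :=
    exists_mem_center_orderOf_eq (hG.of_surjective φ.rangeRestrict φ.rangeRestrict_surjective)
  have horder : orderOf (φ c) = p := (Subgroup.orderOf_coe _).trans horder
  refine ⟨c, ?_, fun x ↦ ?_, fun g x ↦ ?_⟩
  · by_contra! h
    have hone : φ c = 1 := Equiv.ext h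
    exact (Fact.out : p.Prime).one_lt.ne (by rw [← horder, hone, orderOf_one])
  · have hpow : φ c ^ p = 1 := horder ▸ pow_orderOf_eq_one _
    rw [← map_pow] at hpow
    exact DFunLike.congr_fun hpow x
  · have hcomm := congrArg Subtype.val (Subgroup.mem_center_iff.1 hc ⟨φ g, g, rfl⟩)
    exact (DFunLike.congr_fun hcomm x).symm

end Orbits

section TransitiveLinear

open Module MulAction Representation

/-- The group `G` acts on `V` as a transitive linear group: any two nonzero vectors lie in the same
orbit. Linearity of the action is left to the instances `DistribMulAction` and `SMulCommClass`. -/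
def IsTransitiveOnNonzero (G V : Type*) [SMul G V] [Zero V] : Prop :=
  ∀ v w : V, v ≠ 0 → w ≠ 0 → ∃ g : G, g • v = w

section Orbits

variable {G V : Type*} [Group G] [AddCommGroup V] [DistribMulAction G V] [Finite V]

theorem IsTransitiveOnNonzero.natCard_orbit (hV : IsTransitiveOnNonzero G V) {v : V}
    (hv : v ≠ 0) : Nat.card (orbit G v) = Nat.card V - 1 := by
  have horbit : orbit G v = {0}ᶜ := by
    ext w
    refine ⟨?_, fun hw ↦ hV v w hv hw⟩
    rintro ⟨g, rfl⟩
    exact (smul_ne_zero_iff_ne g).2 hv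
  rw [horbit, Nat.card_coe_set_eq, Set.ncard_compl, Set.ncard_singleton]

theorem IsTransitiveOnNonzero.pow_dvd_natCard_orbit_sylow [Finite G]
    (hV : IsTransitiveOnNonzero G V) {p n : ℕ} [Fact p.Prime] (hp : p ^ n ∣ Nat.card V - 1)
    (P : Sylow p G) {v : V} (hv : v ≠ 0) : p ^ n ∣ Nat.card (orbit P v) :=
  pow_dvd_card_orbit_sylow P (hV.natCard_orbit hv ▸ hp)

theorem IsTransitiveOnNonzero.exists_sylow_smul_ne [Finite G] (hV : IsTransitiveOnNonzero G V)
    {p : ℕ} [Fact p.Prime] (hp : p ∣ Nat.card V - 1) (P : Sylow p G) {v : V} (hv : v ≠ 0) :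
    ∃ g : P, g • v ≠ v := by
  by_contra! h
  have hdvd := hV.pow_dvd_natCard_orbit_sylow (n := 1) (by rwa [pow_one]) P hv
  have horbit : orbit P v = {v} := by
    refine Set.eq_singleton_iff_unique_mem.2 ⟨mem_orbit_self v, ?_⟩
    rintro _ ⟨g, rfl⟩
    exact h g
  rw [horbit, Nat.card_unique, pow_one] at hdvd
  exact (Fact.out : p.Prime).one_lt.ne' (Nat.dvd_one.1 hdvd)

end Orbits

variable {F V G : Type*} [Field F] [AddCommGroup V] [Module F V] [Finite V]
  [Group G] [Finite G] [DistribMulAction G V] [SMulCommClass G F V]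

theorem natCast_ne_zero_of_dvd_natCard_sub_one [Nontrivial V] {p : ℕ} (hp : p.Prime)
    (hpV : p ∣ Nat.card V - 1) : (p : F) ≠ 0 := by
  intro hpF
  obtain ⟨v, hv⟩ := exists_ne (0 : V)
  have := Fact.mk hp
  have horder : addOrderOf v = p :=
    addOrderOf_eq_prime (by rw [← Nat.cast_smul_eq_nsmul F, hpF, zero_smul]) hv
  have hdvd := (Nat.dvd_sub_iff_right Nat.card_pos (horder ▸ addOrderOf_dvd_natCard v)).1 hpV
  exact hp.one_lt.ne' (Nat.dvd_one.1 hdvd)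

theorem IsTransitiveOnNonzero.sub_one_dvd_finrank [Nontrivial V] (hV : IsTransitiveOnNonzero G V)
    {p : ℕ} (hp : p.Prime) (hpV : p ∣ Nat.card V - 1)
    (hG : ∀ (g : G) (k m : ℕ), orderOf g = p ^ k → m.Coprime p → IsConj g (g ^ m)) :
    p - 1 ∣ finrank F V := by
  have := Fact.mk hp
  have hpF : (p : F) ≠ 0 := natCast_ne_zero_of_dvd_natCard_sub_one hp hpV
  obtain ⟨P⟩ : Nonempty (Sylow p G) := inferInstance
  let ρ : Representation F G V := ofDistribMulAction F G V
  have hfixed : invariants (ρ.comp (P : Subgroup G).subtype) = ⊥ := by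
    refine (Submodule.eq_bot_iff _).2 fun v hv ↦ by_contra fun hv0 ↦ ?_
    obtain ⟨g, hg⟩ := hV.exists_sylow_smul_ne hpV P hv0
    exact hg (hv g)
  have hker (g : P) : finrank F (LinearMap.ker (ρ g - 1)) ≡ finrank F V [MOD p - 1] := by
    obtain ⟨k, hk⟩ := IsPGroup.iff_orderOf.1 P.2 g
    rw [← Subgroup.orderOf_coe] at hk
    refine finrank_ker_sub_one_modEq (k := k) hp hpF ?_ fun m hm ↦ ?_
    · rw [← map_pow, ← hk, pow_orderOf_eq_one, map_one]
    · rw [← map_pow]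
      exact ρ.map_isConj (hG g k m hk hm)
  have hmod := finrank_invariants_modEq (ρ.comp (P : Subgroup G).subtype) P.2 hpF hker
  rw [hfixed, finrank_bot] at hmod
  exact Nat.modEq_zero_iff_dvd.1 hmod.symm

theorem IsTransitiveOnNonzero.exists_finrank_eq_two_pow [Finite F] [Nontrivial V]
    (hV : IsTransitiveOnNonzero G V) (hF : Odd (Nat.card F))
    (hG : ∀ (g : G) (m : ℕ), Odd (orderOf g) → m.Coprime (orderOf g) → IsConj g (g ^ m)) :
    ∃ k, finrank F V = 2 ^ k := by
  have hF3 : 3 ≤ Nat.card F := by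
    have := Finite.one_lt_card (α := F)
    rcases hF with ⟨n, hn⟩
    lia
  refine exists_eq_two_pow_of_forall_sub_one_dvd hF3 finrank_pos.ne' fun p hp hodd hdvd ↦ ?_
  rw [← natCard_eq_pow_finrank] at hdvd
  refine hV.sub_one_dvd_finrank hp hdvd fun g k m hk hm ↦ hG g m ?_ ?_
  · exact hk ▸ hodd.pow
  · exact hk ▸ hm.pow_right k

theorem IsTransitiveOnNonzero.two_pow_dvd_finrank_eqLocus [Finite F]
    (hV : IsTransitiveOnNonzero G V) (hF : Odd (Nat.card F)) {k : ℕ} (hk : finrank F V = 2 ^ k)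
    (S : Sylow 2 G) {c : G} (hc : ∀ (g : S) (v : V), c • g • v = g • c • v) :
    2 ^ k ∣ finrank F (LinearMap.eqLocus (DistribSMul.toLinearMap F V c) LinearMap.id) := by
  have := Fact.mk Nat.prime_two
  let W : Submodule F V := LinearMap.eqLocus (DistribSMul.toLinearMap F V c) LinearMap.id
  let Y : SubMulAction S V :=
    { carrier := W \ {0}
      smul_mem' g v hv := ⟨(hc g v).trans (congrArg (g • ·) hv.1),
        (smul_ne_zero_iff_ne g).2 hv.2⟩ }
  have hYW : Nat.card Y = Nat.card F ^ finrank F W - 1 := by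
    rw [← natCard_eq_pow_finrank]
    exact Set.ncard_sdiff_singleton_of_mem W.zero_mem
  refine two_pow_dvd_of_ordProj_two_dvd hF Finite.one_lt_card.ne' ?_
  rw [← hYW, ← hk, ← natCard_eq_pow_finrank]
  exact dvd_card_of_forall_dvd_card_orbit Y fun v hv ↦
    hV.pow_dvd_natCard_orbit_sylow (Nat.ordProj_dvd _ _) S hv.2

-- Some `c` in a Sylow `2`-subgroup `S` acts as a central involution of the image of `S`; the fixed
-- space of `c` is a proper subspace whose dimension is divisible by `finrank F V`, so it is zero.
theorem IsTransitiveOnNonzero.exists_smul_eq_neg_of_finrank_eq_two_pow [Finite F]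
    (hV : IsTransitiveOnNonzero G V) (hF : Odd (Nat.card F)) {k : ℕ} (hk : finrank F V = 2 ^ k) :
    ∃ g : G, IsPGroup 2 (Subgroup.zpowers g) ∧ ∀ v : V, g • v = -v := by
  have := Fact.mk Nat.prime_two
  have : Nontrivial V := nontrivial_of_finrank_pos (R := F) (hk ▸ Nat.two_pow_pos k)
  have heven : 2 ∣ Nat.card V - 1 := by
    rw [natCard_eq_pow_finrank (K := F)]
    exact (hF.pow.tsub_odd odd_one).two_dvd
  obtain ⟨S⟩ : Nonempty (Sylow 2 G) := inferInstance
  obtain ⟨v₀, hv₀⟩ := exists_ne (0 : V)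
  obtain ⟨g, hg⟩ := hV.exists_sylow_smul_ne heven S hv₀
  obtain ⟨c, ⟨x, hx⟩, hc2, hcomm⟩ := exists_smul_comm_of_isPGroup S.2 ⟨g, v₀, hg⟩
  let W : Submodule F V := LinearMap.eqLocus (DistribSMul.toLinearMap F V (c : G)) LinearMap.id
  have hlt : finrank F W < 2 ^ k := hk ▸ Submodule.finrank_lt fun htop ↦
    hx (htop ▸ Submodule.mem_top : x ∈ W)
  have hW : W = ⊥ := Submodule.finrank_eq_zero.1
    (Nat.eq_zero_of_dvd_of_lt (hV.two_pow_dvd_finrank_eqLocus hF hk S hcomm) hlt)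
  refine ⟨c, S.2.to_le (Subgroup.zpowers_le.2 c.2), fun v ↦ ?_⟩
  have hfix : v + c • v ∈ W := by
    change c • (v + c • v) = v + c • v
    rw [smul_add, smul_smul, ← sq, hc2, add_comm]
  exact eq_neg_of_add_eq_zero_right ((Submodule.mem_bot F).1 (hW ▸ hfix))

end TransitiveLinear

/-! ### Automorphisms of `p`-groups -/

section PGroupAutomorphisms

open Subgroup
open scoped commutatorElement

theorem mul_pow_of_commutatorElement_mem_center {G : Type*} [Group G] {x y : G}
    (h : ⁅x, y⁆ ∈ center G) (n : ℕ) : (y * x) ^ n = y ^ n * x ^ n * ⁅x, y⁆ ^ n.choose 2 := by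
  have hcomm (z : G) : Commute ⁅x, y⁆ z := (mem_center_iff.1 h z).symm
  have hsemi : SemiconjBy y (⁅x, y⁆ * x) x := by
    rw [SemiconjBy, ← mul_assoc, ← (hcomm y).eq, commutatorElement_def]
    group
  induction n with
  | zero => simp
  | succ n ih =>
    have hxy : x ^ n * y = y * x ^ n * ⁅x, y⁆ ^ n := by
      rw [← (hsemi.pow_right n).eq, (hcomm x).mul_pow, ((hcomm _).pow_left n).eq, mul_assoc]
    calc (y * x) ^ (n + 1)
        = y ^ n * (x ^ n * y) * x * ⁅x, y⁆ ^ n.choose 2 := by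
          rw [pow_succ, ih, mul_assoc, ((hcomm _).pow_left _).eq]
          simp only [mul_assoc]
      _ = y ^ n * (y * x ^ n) * (⁅x, y⁆ ^ n * x) * ⁅x, y⁆ ^ n.choose 2 := by
          rw [hxy]
          simp only [mul_assoc]
      _ = y ^ (n + 1) * x ^ (n + 1) * ⁅x, y⁆ ^ (n + 1).choose 2 := by
          rw [((hcomm x).pow_left n).eq, Nat.choose_succ_succ' n 1, Nat.choose_one_right,
            pow_add ⁅x, y⁆, pow_succ y, pow_succ x]
          simp only [mul_assoc]

theorem eq_one_of_eq_inv_of_pow_eq_one {G : Type*} [Group G] {q : ℕ} (hq : Odd q) {z : G}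
    (hz : z ^ q = 1) (hinv : z = z⁻¹) : z = 1 := by
  have hsq : z ^ 2 = 1 := by rw [sq, ← eq_inv_iff_mul_eq_one, ← hinv]
  have hgcd := pow_gcd_eq_one.2 ⟨hsq, hz⟩
  rwa [(Nat.coprime_two_left.2 hq : Nat.gcd 2 q = 1), pow_one] at hgcd

variable {Q : Type*} [Group Q] {q : ℕ} {σ : Q →* Q}

theorem fixedPointFree_of_forall_eq_inv (hq : Odd q) (hQ : IsPGroup q Q)
    (hσ : ∀ z : Q, z ^ q = 1 → σ z = z⁻¹) : MonoidHom.FixedPointFree σ := by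
  intro s hs
  obtain ⟨j, hj⟩ := hQ s
  induction j generalizing s with
  | zero => simpa using hj
  | succ j ih =>
    have hsq : s ^ q = 1 := ih (s ^ q) (by rw [map_pow, hs]) (by rw [← pow_mul, ← pow_succ', hj])
    exact eq_one_of_eq_inv_of_pow_eq_one hq hsq (hs.symm.trans (hσ s hsq))

variable {Z : Subgroup Q}

theorem map_mul_self_mem_of_forall_eq_inv (hq : q.Prime) (hodd : Odd q) (hZ : Z ≤ center Q)
    (hmem : ∀ z, z ∈ Z ↔ z ^ q = 1) (hσ : ∀ z ∈ Z, σ z = z⁻¹) {x : Q} (hx : x ^ q ∈ Z)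
    (hcomm : ∀ s, ⁅x, s⁆ ∈ Z) : σ x * x ∈ Z := by
  have hchoose : ⁅x, σ x⁆ ^ q.choose 2 = 1 := by
    have hlt : 2 < q := by
      have := hq.two_le
      rcases hodd with ⟨n, hn⟩
      lia
    obtain ⟨i, hi⟩ := hq.dvd_choose_self two_ne_zero hlt
    rw [hi, pow_mul, (hmem _).1 (hcomm _), one_pow]
  rw [hmem, mul_pow_of_commutatorElement_mem_center (hZ (hcomm _)), hchoose, ← map_pow, hσ _ hx]
  group

theorem commutatorElement_map_eq (hZ : Z ≤ center Q) (hσ : ∀ z ∈ Z, σ z = z⁻¹) {x : Q}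
    (hx : σ x * x ∈ Z) (hcomm : ∀ s, ⁅x, s⁆ ∈ Z) (s : Q) : ⁅x, σ s⁆ = ⁅x, s⁆ := by
  have hn := mem_center_iff.1 (hZ hx)
  refine inv_injective ?_
  calc ⁅x, σ s⁆⁻¹ = x⁻¹ * (x * ⁅x, σ s⁆⁻¹) := by group
    _ = x⁻¹ * (⁅x, σ s⁆⁻¹ * x) := by rw [mem_center_iff.1 (inv_mem (hZ (hcomm (σ s)))) x]
    _ = ⁅x⁻¹, σ s⁆ := by simp only [commutatorElement_def]; group
    _ = (σ x * x) * (x⁻¹ * σ s * x) * (σ x * x)⁻¹ * (σ s)⁻¹ := by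
      rw [← hn, commutatorElement_def]
      group
    _ = σ ⁅x, s⁆ := by
      rw [map_commutatorElement, commutatorElement_def]
      group
    _ = ⁅x, s⁆⁻¹ := hσ _ (hcomm s)

theorem mem_center_of_forall_commutatorElement_map_eq [Finite Q]
    (hσ : MonoidHom.FixedPointFree σ) {x : Q} (hx : ∀ s, ⁅x, s⁆ ∈ center Q)
    (hcomm : ∀ s, ⁅x, σ s⁆ = ⁅x, s⁆) : x ∈ center Q := by
  refine mem_center_iff.2 fun w ↦ ?_
  obtain ⟨s, rfl⟩ := hσ.commutatorMap_surjective w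
  have hc := mem_center_iff.1 (hx s) (s / σ s)
  rw [MonoidHom.commutatorMap_apply, eq_comm, ← mul_inv_eq_iff_eq_mul]
  calc x * (s / σ s) * x⁻¹ = (⁅x, s⁆ * s) * (⁅x, σ s⁆ * σ s)⁻¹ := by
        simp only [commutatorElement_def, div_eq_mul_inv]
        group
    _ = ⁅x, s⁆ * (s / σ s) * ⁅x, s⁆⁻¹ := by
        rw [hcomm, div_eq_mul_inv]
        simp only [mul_inv_rev, mul_assoc]
    _ = s / σ s := by rw [← hc, mul_inv_cancel_right]

theorem exists_notMem_pow_mem_commutatorElement_mem [Finite Q] [Fact q.Prime]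
    (hQ : IsPGroup q Q) [Z.Normal] (hZ : Z ≠ ⊤) :
    ∃ x ∉ Z, x ^ q ∈ Z ∧ ∀ s, ⁅x, s⁆ ∈ Z := by
  have : Nontrivial (Q ⧸ Z) := QuotientGroup.nontrivial_iff.2 hZ
  obtain ⟨c, hc, hcq⟩ := exists_mem_center_orderOf_eq (hQ.to_quotient Z)
  obtain ⟨x, rfl⟩ := QuotientGroup.mk_surjective c
  refine ⟨x, fun hx ↦ ?_, ?_, fun s ↦ ?_⟩
  · rw [(QuotientGroup.eq_one_iff x).2 hx, orderOf_one] at hcq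
    exact (Fact.out : q.Prime).one_lt.ne hcq
  · rw [← QuotientGroup.eq_one_iff, QuotientGroup.mk_pow, ← hcq, pow_orderOf_eq_one]
  · rw [← QuotientGroup.eq_one_iff]
    exact commutatorElement_eq_one_iff_mul_comm.2 (mem_center_iff.1 hc s).symm

theorem exists_mem_center_orderOf_eq_sq [Finite Q] [Fact q.Prime] (hodd : Odd q)
    (hQ : IsPGroup q Q) (hZ : Z ≤ center Q) (hmem : ∀ z, z ∈ Z ↔ z ^ q = 1) (hne : Z ≠ ⊤)
    (hσ : ∀ z ∈ Z, σ z = z⁻¹) : ∃ x ∈ center Q, orderOf x = q ^ 2 := by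
  have : Z.Normal := ⟨fun z hz g ↦ by rwa [mem_center_iff.1 (hZ hz) g, mul_inv_cancel_right]⟩
  have hfree := fixedPointFree_of_forall_eq_inv hodd hQ fun z hz ↦ hσ z ((hmem z).2 hz)
  obtain ⟨x, hxZ, hxq, hcomm⟩ := exists_notMem_pow_mem_commutatorElement_mem hQ hne
  have hxx : σ x * x ∈ Z := map_mul_self_mem_of_forall_eq_inv Fact.out hodd hZ hmem hσ hxq hcomm
  refine ⟨x, ?_, orderOf_eq_prime_pow ?_ ?_⟩
  · exact mem_center_of_forall_commutatorElement_map_eq hfree (fun s ↦ hZ (hcomm s))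
      (commutatorElement_map_eq hZ hσ hxx hcomm)
  · rwa [pow_one, ← hmem]
  · rwa [pow_succ, pow_one, pow_mul, ← hmem]

end PGroupAutomorphisms

/-! ### Inverted normal subgroups -/

section Inverted

open Subgroup

variable {G : Type*} [Group G] {N : Subgroup G} {t : G}

theorem conjNormal_mem_center_of_forall_conj_eq_inv [N.Normal]
    (ht : ∀ n ∈ N, t * n * t⁻¹ = n⁻¹) : (MulAut.conjNormal t : MulAut N) ∈ center (MulAut N) := by
  have hinv (n : N) : (MulAut.conjNormal t : MulAut N) n = n⁻¹ := Subtype.ext (ht n n.2)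
  refine mem_center_iff.2 fun f ↦ MulEquiv.ext fun n ↦ ?_
  rw [MulAut.mul_apply, MulAut.mul_apply, hinv, hinv, map_inv]

theorem sq_conjNormal_of_forall_conj_eq_inv [N.Normal]
    (ht : ∀ n ∈ N, t * n * t⁻¹ = n⁻¹) : (MulAut.conjNormal t : MulAut N) ^ 2 = 1 := by
  have hinv (n : N) : (MulAut.conjNormal t : MulAut N) n = n⁻¹ := Subtype.ext (ht n n.2)
  refine MulEquiv.ext fun n ↦ ?_
  rw [sq, MulAut.mul_apply, hinv, hinv, inv_inv, MulAut.one_apply]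

theorem ker_conjNormal [N.Normal] :
    (MulAut.conjNormal : G →* MulAut N).ker = centralizer (N : Set G) := by
  ext g
  simp only [MonoidHom.mem_ker, MulEquiv.ext_iff, Subtype.ext_iff, MulAut.conjNormal_apply,
    MulAut.one_apply, Subtype.forall, mem_centralizer_iff, SetLike.mem_coe, mul_inv_eq_iff_eq_mul]
  simp only [eq_comm]

theorem exists_normal_mem_dvd_index_of_forall_conj_eq_inv [Finite G] [N.Normal]
    {q : ℕ} (hq : q.Prime) (hodd : Odd q)
    (ht : ∀ n ∈ N, t * n * t⁻¹ = n⁻¹) (hdvd : q ∣ (centralizer (N : Set G)).index) :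
    ∃ D : Subgroup G, D.Normal ∧ t ∈ D ∧ q ∣ D.index := by
  let φ : G →* MulAut N := MulAut.conjNormal
  have hZ : (zpowers (φ t)).Normal := ⟨fun z hz g ↦ by
    have hcenter := (zpowers_le.2 (conjNormal_mem_center_of_forall_conj_eq_inv ht)) hz
    rwa [mem_center_iff.1 hcenter g, mul_inv_cancel_right]⟩
  let D : Subgroup G := (zpowers (φ t)).comap φ
  refine ⟨D, hZ.comap φ, mem_zpowers (φ t), ?_⟩
  rw [← ker_conjNormal, ← relIndex_mul_index (ker_le_comap φ (zpowers (φ t))), relIndex_ker] at hdvd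
  refine (hq.dvd_mul.1 hdvd).resolve_left fun hdvd ↦ ?_
  have hle : Nat.card (D.map φ) ∣ Nat.card (zpowers (φ t)) :=
    card_dvd_of_le (map_comap_le φ _)
  have h2 := hdvd.trans (hle.trans (Nat.card_zpowers (φ t) ▸
    orderOf_dvd_of_pow_eq_one (sq_conjNormal_of_forall_conj_eq_inv ht)))
  exact Nat.Coprime.eq_one_of_dvd (Nat.coprime_two_right.2 hodd) h2 ▸ hq |>.ne_one rfl

-- Frattini's argument for the preimage `D` of the image of `⟨t⟩` in `MulAut N`: an element `w` of
-- order `q` normalizing a Sylow `2`-subgroup `T ∋ t` of `D` satisfies `⁅w, t⁆ = w ^ 2 ∈ T`.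
theorem not_dvd_index_centralizer_of_forall_conj_eq_inv [Finite G] [N.Normal]
    {q : ℕ} (hq : q.Prime) (hodd : Odd q)
    (hN : ∀ x : G, x ^ q = 1 → x ∈ N) (ht : ∀ n ∈ N, t * n * t⁻¹ = n⁻¹)
    (ht2 : IsPGroup 2 (zpowers t)) : ¬ q ∣ (centralizer (N : Set G)).index := by
  intro hdvd
  have := Fact.mk hq
  have := Fact.mk Nat.prime_two
  obtain ⟨D, hD, htD, hDq⟩ := exists_normal_mem_dvd_index_of_forall_conj_eq_inv hq hodd ht hdvd
  obtain ⟨T, hT⟩ := (ht2.comap_subtype (K := D)).exists_le_sylow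
  let T' : Subgroup G := (T : Subgroup D).map D.subtype
  have htT : t ∈ T' := ⟨⟨t, htD⟩, hT (mem_zpowers t), rfl⟩
  have hindex : q ∣ Nat.card (normalizer (T' : Set G)) := by
    rw [← relIndex_top_right, ← Sylow.normalizer_sup_eq_top T, relIndex_sup_right] at hDq
    exact hDq.trans (relIndex_dvd_card _ _)
  obtain ⟨⟨w, hw⟩, hwq⟩ := exists_prime_orderOf_dvd_card' q hindex
  rw [orderOf_mk] at hwq
  have hwN : w ∈ N := hN w (hwq ▸ pow_orderOf_eq_one w)
  have hsq : w ^ 2 ∈ T' := by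
    have hcomm : w * t * w⁻¹ * t⁻¹ = w ^ 2 := by
      rw [mul_assoc, mul_assoc, ← mul_assoc t, ht _ (inv_mem hwN), inv_inv, sq]
    exact hcomm ▸ mul_mem ((mem_normalizer_iff.1 hw t).1 htT) (inv_mem htT)
  obtain ⟨i, hi⟩ := T.2.map D.subtype ⟨w ^ 2, hsq⟩
  have hpow : w ^ 2 ^ (i + 1) = 1 := by
    rw [pow_succ', pow_mul]
    exact congrArg Subtype.val hi
  have h2 : q = 2 := (Nat.prime_dvd_prime_iff_eq hq Nat.prime_two).1
    (hq.dvd_of_dvd_pow (hwq ▸ orderOf_dvd_of_pow_eq_one hpow))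
  exact absurd (h2 ▸ hodd) (by decide)

theorem sylow_le_of_not_dvd_index [Finite G] {q : ℕ} [Fact q.Prime] {C : Subgroup G} [C.Normal]
    (hC : ¬ q ∣ C.index) (Q : Sylow q G) : (Q : Subgroup G) ≤ C := by
  obtain ⟨n, hn⟩ := Q.2.index (C.subgroupOf Q)
  have hdvd : q ^ n ∣ C.index := hn ▸ relIndex_dvd_index_of_normal C Q
  have hn0 : n = 0 := by_contra fun h ↦ hC ((dvd_pow_self q h).trans hdvd)
  rw [hn0, pow_zero] at hn
  exact relIndex_eq_one.1 hn

theorem exists_mem_normalizer_forall_conj_eq_inv [Finite G] [N.Normal] {q : ℕ} [Fact q.Prime]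
    (Q : Sylow q G) (hQ : (Q : Subgroup G) ≤ centralizer (N : Set G))
    (ht : ∀ n ∈ N, t * n * t⁻¹ = n⁻¹) :
    ∃ s ∈ normalizer (Q : Set G), ∀ n ∈ N, s * n * s⁻¹ = n⁻¹ := by
  obtain ⟨s, hs, c, hc, rfl⟩ := mem_sup_of_normal_right.1
    (Sylow.normalizer_sup_eq_top' Q hQ ▸ mem_top t)
  refine ⟨s, hs, fun n hn ↦ ?_⟩
  have hcn : c * n * c⁻¹ = n := by rw [← mem_centralizer_iff.1 hc n hn, mul_inv_cancel_right]
  rw [← ht n hn]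
  calc s * n * s⁻¹ = s * (c * n * c⁻¹) * s⁻¹ := by rw [hcn]
    _ = s * c * n * (s * c)⁻¹ := by group

theorem conj_pow_eq_pow_pow {x g : G} {m : ℕ} (h : g * x * g⁻¹ = x ^ m) (n : ℕ) :
    g ^ n * x * (g ^ n)⁻¹ = x ^ m ^ n := by
  induction n with
  | zero => simp
  | succ n ih =>
    calc g ^ (n + 1) * x * (g ^ (n + 1))⁻¹ = g * (g ^ n * x * (g ^ n)⁻¹) * g⁻¹ := by group
      _ = x ^ m ^ (n + 1) := by rw [ih, ← conj_pow, h, ← pow_mul, ← pow_succ']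

theorem one_add_pow_ne_one {q d : ℕ} (hq : 1 < q) (hd : q.Coprime d) :
    (1 + q : ZMod (q ^ 2)) ^ d ≠ 1 := by
  intro h
  have hzero : (q : ZMod (q ^ 2)) ^ 2 = 0 := by rw [← Nat.cast_pow, ZMod.natCast_self]
  have hpow : (1 + q : ZMod (q ^ 2)) ^ q = 1 := by
    have hdvd := dvd_sub_pow_of_dvd_sub (p := q) (a := (1 + q : ZMod (q ^ 2))) (b := 1) (by simp) 1
    rwa [hzero, zero_dvd_iff, pow_one, one_pow, sub_eq_zero] at hdvd
  have hgcd := pow_gcd_eq_one.2 ⟨hpow, h⟩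
  rw [hd.gcd_eq_one, pow_one, add_eq_left, ZMod.natCast_eq_zero_iff] at hgcd
  exact (Nat.le_of_dvd (by lia) hgcd).not_gt (lt_self_pow₀ hq one_lt_two)

-- By Burnside fusion `x ↦ x ^ (1 + q)` would be induced by some `g` normalizing `Q`; this
-- automorphism of `⟨x⟩` has order `q`, although `g ^ d` centralizes `x` for some `d` prime to `q`.
theorem not_isConj_pow_of_mem_centralizer [Finite G] {q : ℕ} [Fact q.Prime] (Q : Sylow q G)
    {x : G} (hx : x ∈ centralizer (Q : Set G)) (horder : orderOf x = q ^ 2) :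
    ¬ IsConj x (x ^ (1 + q)) := by
  intro hconj
  obtain ⟨g, hg⟩ := isConj_iff.1 hconj
  obtain ⟨n, hn, hgn⟩ := Q.conj_eq_normalizer_conj_of_mem_centralizer x g⁻¹ hx
    (by rw [inv_inv, hg]; exact pow_mem hx _)
  rw [inv_inv, hg] at hgn
  replace hgn : n⁻¹ * x * n⁻¹⁻¹ = x ^ (1 + q) := by rw [inv_inv, hgn]
  let d := (Q : Subgroup G).relIndex (normalizer (Q : Set G))
  have hd : q.Coprime d := (Nat.Prime.coprime_iff_not_dvd Fact.out).2 fun hdvd ↦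
    Q.not_dvd_index (hdvd.trans (relIndex_dvd_index_of_le le_normalizer))
  have hmem : n⁻¹ ^ d ∈ (Q : Subgroup G) :=
    pow_index_mem ((Q : Subgroup G).subgroupOf (normalizer ((Q : Subgroup G) : Set G)))
      ⟨n⁻¹, inv_mem hn⟩
  have hfix : x ^ (1 + q) ^ d = x ^ 1 := by
    rw [← conj_pow_eq_pow_pow hgn, mem_centralizer_iff.1 hx _ hmem, mul_inv_cancel_right, pow_one]
  rw [pow_eq_pow_iff_modEq, horder, ← ZMod.natCast_eq_natCast_iff] at hfix
  exact one_add_pow_ne_one (Fact.out : q.Prime).one_lt hd (mod_cast hfix)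

theorem sylow_eq_of_forall_conj_eq_inv [Finite G] [N.Normal] {q : ℕ} [Fact q.Prime] (hodd : Odd q)
    (hN : ∀ x : G, x ∈ N ↔ x ^ q = 1) (ht : ∀ n ∈ N, t * n * t⁻¹ = n⁻¹)
    (ht2 : IsPGroup 2 (zpowers t)) (hconj : ∀ x : G, orderOf x = q ^ 2 → IsConj x (x ^ (1 + q)))
    (Q : Sylow q G) : (Q : Subgroup G) = N := by
  have hNp : IsPGroup q N := fun n ↦ ⟨1, Subtype.ext (by simpa using (hN n).1 n.2)⟩
  have hNQ : N ≤ Q := by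
    rw [← Q.is_maximal' (hNp.to_sup_of_normal_left Q.2) le_sup_right]
    exact le_sup_left
  have hQ : (Q : Subgroup G) ≤ centralizer (N : Set G) := sylow_le_of_not_dvd_index
    (not_dvd_index_centralizer_of_forall_conj_eq_inv Fact.out hodd (fun x ↦ (hN x).2) ht ht2) Q
  obtain ⟨s, hs, hsN⟩ := exists_mem_normalizer_forall_conj_eq_inv Q hQ ht
  by_contra hne
  obtain ⟨x, hx, horder⟩ := exists_mem_center_orderOf_eq_sq (Z := N.subgroupOf Q)
    (σ := (normalizerMonoidHom (Q : Subgroup G) ⟨s, hs⟩).toMonoidHom) hodd Q.2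
    (fun z hz ↦ mem_center_iff.2 fun g ↦ Subtype.ext (mem_centralizer_iff.1 (hQ g.2) z hz).symm)
    (fun z ↦ by simp [mem_subgroupOf, hN, Subtype.ext_iff])
    (fun h ↦ hne (le_antisymm (subgroupOf_eq_top.1 h) hNQ))
    (fun z hz ↦ Subtype.ext (hsN z hz))
  rw [← orderOf_coe] at horder
  refine not_isConj_pow_of_mem_centralizer Q (mem_centralizer_iff.2 fun g hg ↦ ?_) horder
    (hconj x horder)
  exact congrArg Subtype.val (mem_center_iff.1 hx ⟨g, hg⟩)

end Inverted

/-! ### Conjugacy of elements of odd order -/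

/-- The property (OddC): any two elements of the same odd order are conjugate. -/
def OddOrderConj (G : Type*) [Group G] : Prop :=
  ∀ x y : G, Odd (orderOf x) → orderOf x = orderOf y → IsConj x y

section OddOrderConj

open Subgroup

variable {G : Type*} [Group G] {N : Subgroup G} {q : ℕ}

theorem OddOrderConj.isConj_pow (hG : OddOrderConj G) {g : G} {m : ℕ} (hg : Odd (orderOf g))
    (hm : m.Coprime (orderOf g)) : IsConj g (g ^ m) :=
  hG g (g ^ m) hg hm.symm.orderOf_pow.symm

theorem OddOrderConj.mem_iff_pow_eq_one (hG : OddOrderConj G) [N.Normal] (hN : N ≠ ⊥)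
    (hq : q.Prime) (hodd : Odd q) (helem : ∀ x ∈ N, x ≠ 1 → orderOf x = q) (x : G) :
    x ∈ N ↔ x ^ q = 1 := by
  rcases eq_or_ne x 1 with rfl | hx1
  · simp
  refine ⟨fun hx ↦ helem x hx hx1 ▸ pow_orderOf_eq_one x, fun hx ↦ ?_⟩
  have := Fact.mk hq
  obtain ⟨z, hzN, hz1⟩ := N.bot_or_exists_ne_one.resolve_left hN
  have hz := helem z hzN hz1
  obtain ⟨g, rfl⟩ := isConj_iff.1 (hG z x (hz ▸ hodd) (hz.trans (orderOf_eq_prime hx hx1).symm))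
  exact Normal.conj_mem inferInstance z hzN g

theorem OddOrderConj.isMulCommutative (hG : OddOrderConj G) [Finite G] [N.Normal] (hN : N ≠ ⊥)
    (hq : q.Prime) (hodd : Odd q) (helem : ∀ x ∈ N, x ≠ 1 → orderOf x = q) :
    IsMulCommutative N := by
  have := Fact.mk hq
  have : Nontrivial N := (nontrivial_iff_ne_bot N).2 hN
  have hpow := hG.mem_iff_pow_eq_one hN hq hodd helem
  have hp : IsPGroup q N := fun n ↦ ⟨1, Subtype.ext (by simpa using (hpow n).1 n.2)⟩
  let Z : Subgroup G := (center N).map N.subtype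
  have hZN : Z ≤ N := map_subtype_le (center N)
  have hZ : Z ≠ ⊥ := fun h ↦ (nontrivial_iff_ne_bot _).1 hp.center_nontrivial
    ((map_eq_bot_iff_of_injective _ N.subtype_injective).1 h)
  have hmem (a : N) : a ∈ center N := by
    obtain ⟨z, hz, hza⟩ := (hG.mem_iff_pow_eq_one hZ hq hodd
      (fun x hx ↦ helem x (hZN hx)) a).2 ((hpow a).1 a.2)
    rwa [← Subtype.ext hza]
  exact ⟨⟨fun a b ↦ mem_center_iff.1 (hmem b) a⟩⟩

open scoped IsMulCommutative in
theorem OddOrderConj.exists_forall_conj_eq_inv (hG : OddOrderConj G) [Finite G] [N.Normal]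
    (hN : N ≠ ⊥) (hq : q.Prime) (hodd : Odd q) (helem : ∀ x ∈ N, x ≠ 1 → orderOf x = q) :
    ∃ t : G, IsPGroup 2 (zpowers t) ∧ ∀ n ∈ N, t * n * t⁻¹ = n⁻¹ := by
  have := Fact.mk hq
  have : Nontrivial N := (nontrivial_iff_ne_bot N).2 hN
  have := hG.isMulCommutative hN hq hodd helem
  let : MulDistribMulAction G N := MulDistribMulAction.compHom N (MulAut.conjNormal : G →* MulAut N)
  let : DistribMulAction G (Additive N) := DistribMulAction.compHom (Additive N)
    ((monoidEndToAdditive N).toMonoidHom.comp (MulDistribMulAction.toMonoidEnd G N))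
  let : Module (ZMod q) (Additive N) := AddCommGroup.zmodModule fun n ↦
    Subtype.ext ((hG.mem_iff_pow_eq_one hN hq hodd helem n.toMul).1 n.toMul.2)
  have : SMulCommClass G (ZMod q) (Additive N) :=
    ⟨fun g c v ↦ ZMod.map_smul (DistribSMul.toAddMonoidHom (Additive N) g) c v⟩
  have hV : IsTransitiveOnNonzero G (Additive N) := fun v w hv hw ↦ by
    have horder (u : Additive N) (hu : u ≠ 0) : orderOf (u.toMul : G) = q :=
      helem _ u.toMul.2 fun h ↦ hu (Subtype.ext h)
    obtain ⟨g, hg⟩ := isConj_iff.1 (hG v.toMul w.toMul (horder v hv ▸ hodd)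
      ((horder v hv).trans (horder w hw).symm))
    exact ⟨g, Subtype.ext hg⟩
  have hF : Odd (Nat.card (ZMod q)) := (Nat.card_zmod q).symm ▸ hodd
  obtain ⟨k, hk⟩ := hV.exists_finrank_eq_two_pow (F := ZMod q) hF
    fun g m hg hm ↦ hG.isConj_pow hg hm
  obtain ⟨t, ht2, ht⟩ := hV.exists_smul_eq_neg_of_finrank_eq_two_pow hF hk
  exact ⟨t, ht2, fun n hn ↦ congrArg Subtype.val (ht (Additive.ofMul ⟨n, hn⟩))⟩

theorem minimal_normal_elementary_abelian_complement_general (hG : OddOrderConj G) [Finite G]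
    [N.Normal] (hN : N ≠ ⊥) (hq : q.Prime) (hodd : Odd q)
    (helem : ∀ x ∈ N, x ≠ 1 → orderOf x = q) :
    ∃ H : Subgroup G, H.IsComplement' N ∧ (Nat.card H).Coprime (Nat.card N) ∧
      ∃ P : Sylow q G, (P : Subgroup G) = N := by
  have := Fact.mk hq
  obtain ⟨t, ht2, ht⟩ := hG.exists_forall_conj_eq_inv hN hq hodd helem
  obtain ⟨Q⟩ : Nonempty (Sylow q G) := inferInstance
  have hQ : (Q : Subgroup G) = N := by
    refine sylow_eq_of_forall_conj_eq_inv hodd (hG.mem_iff_pow_eq_one hN hq hodd helem) ht ht2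
      (fun x hx ↦ hG.isConj_pow (hx ▸ hodd.pow) ?_) Q
    exact hx ▸ Nat.Coprime.pow_right 2 (by simp)
  have hcoprime : (Nat.card N).Coprime N.index := hQ ▸ Q.card_coprime_index
  obtain ⟨H, hH⟩ := exists_left_complement'_of_coprime hcoprime
  exact ⟨H, hH, hH.index_eq_card ▸ hcoprime.symm, Q, hQ⟩

end OddOrderConj

/-- **Claim 3 in the proof of Theorem B.** Let `G` be a finite rational
group in which elements of the same odd order are conjugate, with `O₂(G) = 1`, and
suppose the unique minimal normal subgroup `N` of `G` is elementary abelian of order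
`q ^ r` for an odd prime `q`.  Then `N` has a complement `H` in `G`, `|H|` and `|N|`
are coprime, and `N` is a Sylow `q`-subgroup of `G`. -/
theorem minimal_normal_elementary_abelian_complement (G : Type) [Group G] [Finite G]
    (hrat : ∀ (g : G) (m : ℤ), Int.gcd m (orderOf g) = 1 → IsConj (g ^ m) g)
    (hodd : ∀ x y : G, Odd (orderOf x) → orderOf x = orderOf y → IsConj x y)
    (hO2 : ∀ H : Subgroup G, H.Normal → IsPGroup 2 H → H = ⊥)
    (N : Subgroup G) (hN : N.Normal) (hNne : N ≠ ⊥)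
    (hmono : ∀ M : Subgroup G, M.Normal → M ≠ ⊥ → N ≤ M)
    (q : ℕ) (hq : q.Prime) (hqodd : Odd q) (r : ℕ) (hr : 0 < r)
    (hcard : Nat.card N = q ^ r)
    (hab : ∀ a b : N, a * b = b * a)
    (helem : ∀ x : G, x ∈ N → x ≠ 1 → orderOf x = q) :
    ∃ H : Subgroup G, H.IsComplement' N ∧
      Nat.Coprime (Nat.card H) (Nat.card N) ∧
      ∃ P : Sylow q G, (P : Subgroup G) = N :=
  minimal_normal_elementary_abelian_complement_general hodd hNne hq hqodd helem
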